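/- Let G = A₁ ∗_C A₋₁ be the amalgamated free product of A₁ and A₋₁ along a finite subgroup C, where A₁ and A₋₁ are word hyperbolic groups with property (Q). Then G is word hyperbolic and has property (Q). -/

import Mathlib

universe u v w

section Defs

variable {G : Type u} [Group G]

/-- A finite generating set closed under inversion. -/
def IsSymmGen (X : Set G) : Prop :=
  X.Finite ∧ (∀ x ∈ X, x⁻¹ ∈ X) ∧ Subgroup.closure X = ⊤

/-- Word length of `g` with respect to `X`. -/
noncomputable def wordLength (X : Set G) (g : G) : ℕ :=
  sInf {n : ℕ | ∃ l : List G, l.length = n ∧ (∀ x ∈ l, x ∈ X) ∧ l.prod = g}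

/-- Word metric. -/
noncomputable def wordDist (X : Set G) (g h : G) : ℕ :=
  wordLength X (g⁻¹ * h)

/-- Gromov product with respect to the word metric. -/
noncomputable def gromovProd (X : Set G) (x y w : G) : ℝ :=
  ((wordDist X x w : ℝ) + (wordDist X y w : ℝ) - (wordDist X x y : ℝ)) / 2

end Defs

/-- A group is word hyperbolic if for some finite symmetric generating set the Gromov
product satisfies the hyperbolicity inequality. -/
def IsWordHyperbolic (G : Type u) [Group G] : Prop :=
  ∃ X : Set G, IsSymmGen X ∧ ∃ δ : ℝ, 0 ≤ δ ∧
    ∀ x y z w : G,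
      gromovProd X x z w ≥ min (gromovProd X x y w) (gromovProd X y z w) - δ

/-- A subgroup is quasiconvex: it is finitely generated and word lengths distort linearly. -/
def IsQuasiconvex {G : Type u} [Group G] (A : Subgroup G) : Prop :=
  ∃ Y : Set ↥A, IsSymmGen Y ∧ ∃ X : Set G, IsSymmGen X ∧ ∃ c : ℝ, 0 < c ∧
    ∀ a : ↥A, (wordLength Y a : ℝ) ≤ c * (wordLength X (a : G) : ℝ) + c

/-- Property (Q): every finitely generated subgroup is quasiconvex. -/
def HasPropertyQ (G : Type u) [Group G] : Prop :=
  ∀ H : Subgroup G, H.FG → IsQuasiconvex H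

/-- A group is virtually cyclic if it has a cyclic subgroup of finite index. -/
def IsVirtuallyCyclic (C : Type u) [Group C] : Prop :=
  ∃ Z : Subgroup C, IsCyclic ↥Z ∧ Z.FiniteIndex

/-- `G` is the amalgamated free product of its subgroups `A` and `B` along `C`:
`C = A ⊓ B`, `A ⊔ B = ⊤` and `G` has the pushout universal property. -/
structure IsAmalgamatedFreeProduct {G : Type u} [Group G] (A B C : Subgroup G) : Prop where
  le_left : C ≤ A
  le_right : C ≤ B
  inf_eq : A ⊓ B = C
  sup_eq_top : A ⊔ B = ⊤
  univ : ∀ (K : Type u) [Group K] (f : ↥A →* K) (g : ↥B →* K),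
    (∀ (c : G) (hA : c ∈ A) (hB : c ∈ B), f ⟨c, hA⟩ = g ⟨c, hB⟩) →
    ∃ h : G →* K, (∀ a : ↥A, h a = f a) ∧ (∀ b : ↥B, h b = g b)

section Words

variable {G : Type u} [Group G]

/-- A word over the alphabet `X`. -/
def IsWordOver (X : Set G) (l : List G) : Prop := ∀ x ∈ l, x ∈ X

/-- A geodesic word over `X`. -/
def IsGeodesicWord (X : Set G) (l : List G) : Prop :=
  IsWordOver X l ∧ l.length = wordLength X l.prod

/-- A `lam`-quasigeodesic word over `X`: every subword `v` satisfies
`l(v) ≤ lam * l_X(v̄) + lam`. -/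
def IsQuasigeodesicWord (X : Set G) (lam : ℝ) (l : List G) : Prop :=
  IsWordOver X l ∧
    ∀ v : List G, v <:+: l → (v.length : ℝ) ≤ lam * (wordLength X v.prod : ℝ) + lam

/-- `g` is a shortest element of the subset `S` with respect to `wordLength X`. -/
def ShortestIn (X : Set G) (g : G) (S : Set G) : Prop :=
  g ∈ S ∧ ∀ s ∈ S, wordLength X g ≤ wordLength X s

end Words

/-- `G` together with `ια, ιβ` is the pushout of `ℤ → A, 1 ↦ x` and `ℤ → B, 1 ↦ y`. -/
structure IsAmalgamOverZ {A : Type u} {B : Type v} {G : Type w}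
    [Group A] [Group B] [Group G]
    (ια : A →* G) (ιβ : B →* G) (x : A) (y : B) : Prop where
  comm : ια x = ιβ y
  gen : ια.range ⊔ ιβ.range = ⊤
  univ : ∀ (K : Type (max u v w)) [Group K] (f : A →* K) (g : B →* K),
    f x = g y → ∃ h : G →* K, h.comp ια = f ∧ h.comp ιβ = g

/-!
The letters of a reduced word are determined modulo the finite group `C`. Hence every factor `A i`
has an `A i`-equivariant projection `r i : G → A i`, which reads off the first letter of a reduced
word. If `s` lies in a factor, then `r i g` and `r i (g * s)` differ only by an element of `C`,
unless both `g` and `s` lie in `A i`.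

Let `H` be a finitely generated subgroup. Its elements are represented by words all of whose
suffixes stay close to `H`. Projecting such words to `A i` shows that `H ∩ A i` is coarsely
connected, hence finitely generated, hence quasiconvex by (Q); the same holds for the conjugates of
`H`. Cutting an element of `H` into the letters of its reduced word, all of whose suffixes stay
close to `H`, then bounds its length in `H` linearly in terms of the lengths of its letters, and
the sum of these is linear in its length in `G`.

For hyperbolicity, let `L x y` consist of the points `p` which, in a coset `p * A i` on which the
projections of `x` and `y` differ modulo `C`, lie on a geodesic between these projections. These
sets are coarsely connected, and they form thin triangles because each factor is hyperbolic. By the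
exponential divergence of geodesics they then lie near geodesics, which gives the four-point
condition in `G`.
-/

open scoped Pointwise

theorem exists_nat_bound_of_finite {α : Type*} {s : Set α} (hs : s.Finite) (f : α → ℕ) :
    ∃ K, ∀ x ∈ s, f x ≤ K :=
  (hs.image f).bddAbove.imp fun _ hK _ hx => hK (Set.mem_image_of_mem f hx)

/-! ### Word length -/

section WordLength

variable {Γ Δ : Type*} [Group Γ] [Group Δ] {X : Set Γ} {Y : Set Δ} {g : Γ} {l : List Γ}

theorem IsWordOver.wordLength_prod_le (hl : IsWordOver X l) : wordLength X l.prod ≤ l.length :=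
  Nat.sInf_le ⟨l, rfl, hl, rfl⟩

theorem wordLength_one : wordLength X (1 : Γ) = 0 :=
  Nat.le_zero.1 (IsWordOver.wordLength_prod_le (X := X) (l := []) (List.forall_mem_nil _))

theorem wordLength_le_one (hg : g ∈ X) : wordLength X g ≤ 1 := by
  simpa using IsWordOver.wordLength_prod_le (X := X) (l := [g]) (by simpa [IsWordOver] using hg)

theorem IsSymmGen.exists_isGeodesicWord (hX : IsSymmGen X) (g : Γ) :
    ∃ l, IsGeodesicWord X l ∧ l.prod = g := by
  have hXinv : X ∪ X⁻¹ = X :=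
    Set.union_eq_self_of_subset_right fun x hx => by simpa using hX.2.1 _ hx
  have hg : g ∈ Submonoid.closure X := by
    rw [← hXinv, ← Subgroup.closure_toSubmonoid, hX.2.2]
    trivial
  obtain ⟨l, hl, hlg⟩ := Submonoid.exists_list_of_mem_closure hg
  obtain ⟨l', hlen, hl', rfl⟩ := Nat.sInf_mem
    (s := {n | ∃ l : List Γ, l.length = n ∧ (∀ x ∈ l, x ∈ X) ∧ l.prod = g}) ⟨_, l, rfl, hl, hlg⟩
  exact ⟨l', ⟨hl', hlen⟩, rfl⟩

theorem IsSymmGen.eq_one_or_mem_of_wordLength_le_one (hX : IsSymmGen X)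
    (hg : wordLength X g ≤ 1) : g = 1 ∨ g ∈ X := by
  obtain ⟨l, ⟨hl, hlen⟩, rfl⟩ := hX.exists_isGeodesicWord g
  rcases l with _ | ⟨s, _ | ⟨t, l⟩⟩
  · exact .inl rfl
  · exact .inr (by simpa using hl s)
  · simp only [← hlen, List.length_cons] at hg
    omega

theorem IsSymmGen.wordLength_mul_le (hX : IsSymmGen X) (g h : Γ) :
    wordLength X (g * h) ≤ wordLength X g + wordLength X h := by
  obtain ⟨l, hl, rfl⟩ := hX.exists_isGeodesicWord g
  obtain ⟨l', hl', rfl⟩ := hX.exists_isGeodesicWord h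
  simpa only [List.prod_append, List.length_append, hl.2, hl'.2] using
    IsWordOver.wordLength_prod_le (List.forall_mem_append.2 ⟨hl.1, hl'.1⟩)

theorem IsSymmGen.wordLength_inv_le (hX : IsSymmGen X) (g : Γ) :
    wordLength X g⁻¹ ≤ wordLength X g := by
  obtain ⟨l, hl, rfl⟩ := hX.exists_isGeodesicWord g
  have hinv : IsWordOver X (l.map (·⁻¹)).reverse := fun x hx => by
    obtain ⟨y, hy, rfl⟩ := List.mem_map.1 (List.mem_reverse.1 hx)
    exact hX.2.1 y (hl.1 y hy)
  simpa only [← hl.2, List.prod_inv_reverse, List.length_reverse, List.length_map] using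
    hinv.wordLength_prod_le

theorem IsSymmGen.wordLength_inv (hX : IsSymmGen X) (g : Γ) :
    wordLength X g⁻¹ = wordLength X g :=
  le_antisymm (hX.wordLength_inv_le g) (by simpa using hX.wordLength_inv_le g⁻¹)

theorem IsSymmGen.wordLength_map_le (hX : IsSymmGen X) (hY : IsSymmGen Y) (φ : Γ →* Δ) {K : ℕ}
    (hK : ∀ x ∈ X, wordLength Y (φ x) ≤ K) (g : Γ) :
    wordLength Y (φ g) ≤ K * wordLength X g := by
  obtain ⟨l, ⟨hl, hlen⟩, rfl⟩ := hX.exists_isGeodesicWord g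
  rw [← hlen]
  clear hlen
  induction l with
  | nil => simp [wordLength_one]
  | cons x l ih =>
    obtain ⟨hx, hl⟩ := List.forall_mem_cons.1 hl
    calc wordLength Y (φ (x :: l).prod) = wordLength Y (φ x * φ l.prod) := by simp
      _ ≤ wordLength Y (φ x) + wordLength Y (φ l.prod) := hY.wordLength_mul_le _ _
      _ ≤ K + K * l.length := add_le_add (hK x hx) (ih hl)
      _ = K * (x :: l).length := by rw [List.length_cons]; ring

theorem IsSymmGen.fg (hX : IsSymmGen X) : Group.FG Γ :=
  Group.fg_iff.2 ⟨X, hX.2.2, hX.1⟩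

theorem exists_isSymmGen (Γ : Type*) [Group Γ] [hΓ : Group.FG Γ] : ∃ X : Set Γ, IsSymmGen X := by
  obtain ⟨S, hS, hSfin⟩ := Group.fg_iff.1 hΓ
  exact ⟨S ∪ S⁻¹, hSfin.union hSfin.inv, fun x hx => by simpa [or_comm] using hx,
    by rw [Subgroup.closure_union, Subgroup.closure_inv, sup_idem, hS]⟩

end WordLength

section Quasiconvex

variable {Γ : Type*} [Group Γ] {X : Set Γ} {P : Subgroup Γ}

theorem IsQuasiconvex.exists_wordLength_map_le (hP : IsQuasiconvex P) (hX : IsSymmGen X)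
    {Δ : Type*} [Group Δ] {Y : Set Δ} (hY : IsSymmGen Y) (φ : P →* Δ) :
    ∃ K : ℕ, ∀ a : P, wordLength Y (φ a) ≤ K * (wordLength X (a : Γ) + 1) := by
  obtain ⟨V, hV, W, hW, c, -, hVW⟩ := hP
  obtain ⟨K, hK⟩ := exists_nat_bound_of_finite hV.1 fun v => wordLength Y (φ v)
  obtain ⟨L, hL⟩ := exists_nat_bound_of_finite hX.1 (wordLength W)
  refine ⟨K * ⌈c⌉₊ * (L + 1), fun a => ?_⟩
  have hVa : wordLength V a ≤ ⌈c⌉₊ * (wordLength W (a : Γ) + 1) := by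
    rw [← Nat.cast_le (α := ℝ)]
    push_cast
    calc (wordLength V a : ℝ) ≤ c * (wordLength W (a : Γ) + 1) := by
          rw [mul_add_one]; exact hVW a
      _ ≤ ⌈c⌉₊ * (wordLength W (a : Γ) + 1) := by gcongr; exact Nat.le_ceil c
  have hWa : wordLength W (a : Γ) ≤ L * wordLength X (a : Γ) :=
    hX.wordLength_map_le hW (MonoidHom.id Γ) hL a
  calc wordLength Y (φ a) ≤ K * wordLength V a := hV.wordLength_map_le hY φ hK a
    _ ≤ K * (⌈c⌉₊ * (L * wordLength X (a : Γ) + 1)) := by gcongr; exact hVa.trans (by gcongr)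
    _ ≤ K * (⌈c⌉₊ * ((L + 1) * (wordLength X (a : Γ) + 1))) := by gcongr; nlinarith
    _ = K * ⌈c⌉₊ * (L + 1) * (wordLength X (a : Γ) + 1) := by ring

theorem isQuasiconvex_of_wordLength_le {Y : Set P} (hY : IsSymmGen Y) (hX : IsSymmGen X) {K : ℕ}
    (hK : ∀ a : P, wordLength Y a ≤ K * (wordLength X (a : Γ) + 1)) : IsQuasiconvex P := by
  refine ⟨Y, hY, X, hX, K + 1, by positivity, fun a => ?_⟩
  have hKa : (wordLength Y a : ℝ) ≤ K * (wordLength X (a : Γ) + 1) := mod_cast hK a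
  nlinarith

end Quasiconvex

/-! ### Geodesic and four-point metrics -/

section Metric

variable {V : Type*} {d : V → V → ℕ} {D E : ℕ} {a b c p x y z : V}

/-- The point `z` lies on a geodesic from `x` to `y` with respect to the distance `d`. -/
def IsBetween (d : V → V → ℕ) (x z y : V) : Prop :=
  d x z + d z y = d x y

/-- A discretely geodesic pseudometric: any two points are joined by a geodesic passing through
a point at every integral distance. Distinct points are allowed to be at distance zero. -/
structure IsGeodesicDist (d : V → V → ℕ) : Prop where
  self : ∀ x, d x x = 0
  symm : ∀ x y, d x y = d y x
  triangle : ∀ x y z, d x z ≤ d x y + d y z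
  exists_between : ∀ x y, ∀ k ≤ d x y, ∃ z, d x z = k ∧ IsBetween d x z y

/-- The four-point condition, which is Gromov's inequality for `d` with constant `D / 2`. -/
def IsFourPoint (d : V → V → ℕ) (D : ℕ) : Prop :=
  ∀ x y z w, d x z + d y w ≤ max (d x y + d z w) (d y z + d x w) + D

theorem IsGeodesicDist.isBetween_left (hd : IsGeodesicDist d) (x y : V) : IsBetween d x x y := by
  rw [IsBetween, hd.self, zero_add]

theorem IsGeodesicDist.isBetween_right (hd : IsGeodesicDist d) (x y : V) : IsBetween d x y y := by
  rw [IsBetween, hd.self, add_zero]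

theorem IsBetween.symm (h : IsBetween d x z y) (hd : IsGeodesicDist d) : IsBetween d y z x := by
  unfold IsBetween at *
  have := hd.symm x y
  have := hd.symm x z
  have := hd.symm y z
  omega

theorem IsBetween.trans (hp : IsBetween d x p z) (hz : IsBetween d x z y)
    (hd : IsGeodesicDist d) : IsBetween d x p y := by
  unfold IsBetween at *
  have := hd.triangle p z y
  have := hd.triangle x p y
  omega

theorem IsGeodesicDist.reflTransGen_between (hd : IsGeodesicDist d) (x y : V) :
    Relation.ReflTransGen (fun a b => IsBetween d x b y ∧ d a b ≤ 1) x y := by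
  induction hn : d x y generalizing y with
  | zero => exact .single ⟨hd.isBetween_right x y, by omega⟩
  | succ n ih =>
    obtain ⟨z, hxz, hz⟩ := hd.exists_between x y n (by omega)
    have hzy : d z y = 1 := by unfold IsBetween at hz; omega
    exact .tail (.mono (fun a b hab => ⟨hab.1.trans hz hd, hab.2⟩) _ _ (ih z hxz))
      ⟨hd.isBetween_right x y, hzy.le⟩

theorem IsFourPoint.exists_between_near (hD : IsFourPoint d D) (hd : IsGeodesicDist d)
    (hp : d a p + d p b ≤ d a b + E) : ∃ e, IsBetween d a e b ∧ d e p ≤ E + D := by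
  obtain ⟨e, hae, he⟩ := hd.exists_between a b (min (d a p) (d a b)) (min_le_right _ _)
  refine ⟨e, he, ?_⟩
  unfold IsBetween at he
  have := hD e a p b
  have := hd.symm a e
  omega

theorem IsFourPoint.add_le_or_add_le (hD : IsFourPoint d D) (hd : IsGeodesicDist d)
    (hp : IsBetween d a p c) (b : V) :
    d a p + d p b ≤ d a b + D ∨ d b p + d p c ≤ d b c + D := by
  unfold IsBetween at hp
  have := hD a b c p
  have := hd.symm b p
  have := hd.symm c p
  omega

end Metric

section WordMetric

variable {Γ : Type*} [Group Γ] {X : Set Γ}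

theorem wordDist_mul_left (g x y : Γ) : wordDist X (g * x) (g * y) = wordDist X x y := by
  simp only [wordDist, mul_inv_rev, mul_assoc, inv_mul_cancel_left]

theorem IsGeodesicWord.wordLength_take_drop {l : List Γ} (hl : IsGeodesicWord X l)
    (hX : IsSymmGen X) (k : ℕ) :
    wordLength X (l.take k).prod = min k l.length ∧
      wordLength X (l.drop k).prod = l.length - k := by
  have htake := IsWordOver.wordLength_prod_le fun x hx => hl.1 x (List.mem_of_mem_take (i := k) hx)
  have hdrop := IsWordOver.wordLength_prod_le fun x hx => hl.1 x (List.mem_of_mem_drop (i := k) hx)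
  have hmul := hX.wordLength_mul_le (l.take k).prod (l.drop k).prod
  rw [List.prod_take_mul_prod_drop, ← hl.2] at hmul
  rw [List.length_take] at htake
  rw [List.length_drop] at hdrop
  omega

theorem IsSymmGen.isGeodesicDist (hX : IsSymmGen X) : IsGeodesicDist (wordDist X) where
  self x := by rw [wordDist, inv_mul_cancel, wordLength_one]
  symm x y := by rw [wordDist, wordDist, ← hX.wordLength_inv, mul_inv_rev, inv_inv]
  triangle x y z := by
    simpa only [wordDist, mul_assoc, mul_inv_cancel_left] using
      hX.wordLength_mul_le (x⁻¹ * y) (y⁻¹ * z)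
  exists_between x y k hk := by
    obtain ⟨l, hl, hprod⟩ := hX.exists_isGeodesicWord (x⁻¹ * y)
    have hlen : l.length = wordDist X x y := by rw [hl.2, hprod, wordDist]
    have hxz : wordDist X x (x * (l.take k).prod) = k := by
      rw [wordDist, inv_mul_cancel_left, (hl.wordLength_take_drop hX k).1]
      omega
    have hzy : (x * (l.take k).prod)⁻¹ * y = (l.drop k).prod := by
      rw [mul_inv_rev, mul_assoc, ← hprod, ← List.prod_take_mul_prod_drop l k,
        inv_mul_cancel_left]
    refine ⟨x * (l.take k).prod, hxz, ?_⟩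
    rw [IsBetween, hxz, wordDist, hzy, (hl.wordLength_take_drop hX k).2]
    omega

theorem isWordHyperbolic_iff_exists_isFourPoint :
    IsWordHyperbolic Γ ↔ ∃ X : Set Γ, IsSymmGen X ∧ ∃ D, IsFourPoint (wordDist X) D := by
  constructor
  · rintro ⟨X, hX, δ, -, h⟩
    refine ⟨X, hX, ⌈2 * δ⌉₊, fun x y z w => ?_⟩
    have hδ := Nat.le_ceil (2 * δ)
    rw [← Nat.cast_le (α := ℝ)]
    push_cast
    rw [← sub_le_iff_le_add, le_max_iff]
    rcases min_le_iff.1 (sub_le_iff_le_add.1 (h x y z w)) with hxy | hyz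
    · left
      simp only [gromovProd] at hxy
      linarith
    · right
      simp only [gromovProd] at hyz
      linarith
  · rintro ⟨X, hX, D, h⟩
    refine ⟨X, hX, D / 2, by positivity, fun x y z w => ?_⟩
    have hD : ((wordDist X x z + wordDist X y w : ℕ) : ℝ) ≤ _ := Nat.cast_le.2 (h x y z w)
    push_cast at hD
    rw [← sub_le_iff_le_add, le_max_iff] at hD
    rw [ge_iff_le, sub_le_iff_le_add, min_le_iff]
    simp only [gromovProd]
    rcases hD with hD | hD
    · left; linarith
    · right; linarith

theorem IsWordHyperbolic.fg (hΓ : IsWordHyperbolic Γ) : Group.FG Γ :=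
  let ⟨_, hX, _⟩ := hΓ
  hX.fg

end WordMetric

/-! ### Guessing geodesics -/

section Guessing

variable {V : Type*} {d : V → V → ℕ} {L : V → V → Set V} {h n k D R : ℕ} {p q x x' y y' z : V}

/-- The sets `L x y` behave like uniform neighbourhoods of geodesics in a hyperbolic space:
they form thin triangles with coarse centres. -/
structure IsThinFamily (d : V → V → ℕ) (L : V → V → Set V) (h : ℕ) : Prop where
  near : ∀ x y, d x y ≤ 1 → ∀ p ∈ L x y, d x p ≤ h
  thin : ∀ x y z, ∀ p ∈ L x z, ∃ q, (q ∈ L x y ∨ q ∈ L y z) ∧ d p q ≤ h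
  center : ∀ x y z, ∃ p ∈ L x z, ∃ q ∈ L x y, ∃ q' ∈ L y z, d p q ≤ h ∧ d p q' ≤ h

/-- Whenever `x` and `y` are at distance at most `n`, every point of `L x y` is within `D` of a
geodesic from `x` to `y`. The bound on the distance is there for the induction. -/
def IsNearGeodesics (d : V → V → ℕ) (L : V → V → Set V) (n D : ℕ) : Prop :=
  ∀ x y, d x y ≤ n → ∀ p ∈ L x y, ∃ q, IsBetween d x q y ∧ d p q ≤ D

theorem exists_linear_le_two_pow (h : ℕ) :
    ∃ k₀, ∀ k ≥ k₀, 4 * (h * (k + 4)) + 4 * h + 2 ≤ 2 ^ k := by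
  refine ⟨2 * (20 * h + 2), fun k hk => ?_⟩
  induction k, hk using Nat.le_induction with
  | base =>
    calc 4 * (h * (2 * (20 * h + 2) + 4)) + 4 * h + 2 ≤ (20 * h + 3) * (20 * h + 3) := by nlinarith
      _ ≤ 2 ^ (20 * h + 2) * 2 ^ (20 * h + 2) :=
        Nat.mul_le_mul Nat.lt_two_pow_self Nat.lt_two_pow_self
      _ = 2 ^ (2 * (20 * h + 2)) := by rw [← pow_add, two_mul]
  | succ k _ ih =>
    have : 2 ^ (k + 1) = 2 ^ k + 2 ^ k := by ring
    nlinarith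

theorem IsThinFamily.isNearGeodesics_two_pow (hL : IsThinFamily d L h) (hd : IsGeodesicDist d)
    (k : ℕ) : IsNearGeodesics d L (2 ^ k) (h * (k + 1)) := by
  induction k with
  | zero =>
    intro x y hxy p hp
    refine ⟨x, hd.isBetween_left x y, ?_⟩
    simpa [hd.symm p x] using hL.near x y hxy p hp
  | succ k ih =>
    intro x y hxy p hp
    obtain ⟨m, hxm, hm⟩ := hd.exists_between x y (min (2 ^ k) (d x y)) (min_le_right _ _)
    obtain ⟨p', hp' | hp', hpp'⟩ := hL.thin x m y p hp
    · obtain ⟨q, hq, hpq⟩ := ih x m (by omega) p' hp'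
      have := hd.triangle p p' q
      exact ⟨q, hq.trans hm hd, by linarith⟩
    · have hmy : d m y ≤ 2 ^ k := by unfold IsBetween at hm; omega
      obtain ⟨q, hq, hpq⟩ := ih m y hmy p' hp'
      have := hd.triangle p p' q
      exact ⟨q, ((hq.symm hd).trans (hm.symm hd) hd).symm hd, by linarith⟩

theorem IsBetween.dist_eq_zero_of_dist_lt (hx' : IsBetween d q x' x)
    (hR : d q x' = min R (d q x)) (hz : IsBetween d x' z x) (hqz : d q z < R)
    (hd : IsGeodesicDist d) : d x' x = 0 := by
  have := hd.triangle q z x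
  unfold IsBetween at hx' hz
  omega

theorem IsThinFamily.dist_le_of_mem_cut (hL : IsThinFamily d L h) (hLD : IsNearGeodesics d L n D)
    (hqx : d q x ≤ n) (hx' : IsBetween d q x' x) (hR : d q x' = min R (d q x))
    (hp : p ∈ L x x' ∨ p ∈ L x' x) (hqp : d q p + D < R) (hd : IsGeodesicDist d) : d p x ≤ h := by
  have hx'x : d x' x ≤ n := by unfold IsBetween at hx'; omega
  have := hd.symm x x'
  have := hd.symm x p
  obtain hp | hp := hp
  · obtain ⟨z, hz, hpz⟩ := hLD x x' (by omega) p hp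
    have := hd.triangle q p z
    have := hx'.dist_eq_zero_of_dist_lt hR (hz.symm hd) (by omega) hd
    have := hL.near x x' (by omega) p hp
    omega
  · obtain ⟨z, hz, hpz⟩ := hLD x' x hx'x p hp
    have := hd.triangle q p z
    have := hx'.dist_eq_zero_of_dist_lt hR hz (by omega) hd
    have := hL.near x' x (by omega) p hp
    have := hd.triangle p x' x
    have := hd.symm p x'
    omega

theorem IsBetween.of_between (hq : IsBetween d x q y) (hx' : IsBetween d q x' x)
    (hy' : IsBetween d q y' y) (hz : IsBetween d x' z y') (hd : IsGeodesicDist d) :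
    IsBetween d x z y := by
  unfold IsBetween at *
  have := hd.triangle x z y
  have := hd.triangle x x' z
  have := hd.triangle z y' y
  have := hd.triangle x' q y'
  have := hd.symm x x'
  have := hd.symm x' q
  have := hd.symm x q
  omega

/-- Bootstrap: cut the geodesic at distance `2 * D + 2 * h + 1` on both sides of the point `q`
near `p`. The outer pieces are too far from `p` to matter, and the inner one is so short that the
logarithmic bound of `IsThinFamily.isNearGeodesics_two_pow` applies to it. -/
theorem IsThinFamily.isNearGeodesics_improve (hL : IsThinFamily d L h) (hd : IsGeodesicDist d)
    (hLD : IsNearGeodesics d L n D) (hk : 4 * D + 4 * h + 2 ≤ 2 ^ k) :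
    IsNearGeodesics d L n (h * (k + 3)) := by
  intro x y hxy p hp
  have hk3 : h * (k + 3) = h * (k + 1) + h + h := by ring
  have hk1 : h ≤ h * (k + 1) := Nat.le_mul_of_pos_right h k.succ_pos
  obtain ⟨q, hq, hpq⟩ := hLD x y hxy p hp
  have hqp := hd.symm p q
  obtain ⟨x', hqx', hx'⟩ := hd.exists_between q x (min (2 * D + 2 * h + 1) (d q x))
    (min_le_right _ _)
  obtain ⟨y', hqy', hy'⟩ := hd.exists_between q y (min (2 * D + 2 * h + 1) (d q y))
    (min_le_right _ _)
  have hqx : d q x ≤ n := by have := hd.symm x q; unfold IsBetween at hq; omega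
  have hqy : d q y ≤ n := by unfold IsBetween at hq; omega
  obtain ⟨p₁, hp₁ | hp₁, hpp₁⟩ := hL.thin x x' y p hp
  · have := hd.triangle q p p₁
    have := hL.dist_le_of_mem_cut hLD hqx hx' hqx' (.inl hp₁) (by omega) hd
    have := hd.triangle p p₁ x
    exact ⟨x, hd.isBetween_left x y, by omega⟩
  obtain ⟨p₂, hp₂, hp₁p₂⟩ := hL.thin x' y' y p₁ hp₁
  have hpp₂ := hd.triangle p p₁ p₂
  obtain hp₂ | hp₂ := hp₂
  · have hx'y' : d x' y' ≤ 2 ^ k := by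
      have := hd.triangle x' q y'
      have := hd.symm x' q
      omega
    obtain ⟨z, hz, hpz⟩ := hL.isNearGeodesics_two_pow hd k x' y' hx'y' p₂ hp₂
    have := hd.triangle p p₂ z
    exact ⟨z, hq.of_between hx' hy' hz hd, by omega⟩
  · have := hd.triangle q p p₂
    have := hL.dist_le_of_mem_cut hLD hqy hy' hqy' (.inr hp₂) (by omega) hd
    have := hd.triangle p p₂ y
    exact ⟨y, hd.isBetween_right x y, by omega⟩

theorem IsThinFamily.exists_isNearGeodesics (hL : IsThinFamily d L h) (hd : IsGeodesicDist d) :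
    ∃ D, ∀ n, IsNearGeodesics d L n D := by
  obtain ⟨k₀, hk₀⟩ := exists_linear_le_two_pow h
  have improve : ∀ n j, IsNearGeodesics d L n (h * (k₀ + j + 3)) →
      IsNearGeodesics d L n (h * (k₀ + 3)) := by
    intro n j
    induction j with
    | zero => exact id
    | succ j ih =>
      exact fun hj => ih (hL.isNearGeodesics_improve hd hj (hk₀ (k₀ + j) (Nat.le_add_right _ _)))
  refine ⟨h * (k₀ + 3), fun n => improve n n fun x y hxy p hp => ?_⟩
  obtain ⟨q, hq, hpq⟩ := hL.isNearGeodesics_two_pow hd n x y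
    (hxy.trans Nat.lt_two_pow_self.le) p hp
  exact ⟨q, hq, hpq.trans (Nat.mul_le_mul_left h (by omega))⟩

theorem IsThinFamily.exists_add_le (hL : IsThinFamily d L h) (hd : IsGeodesicDist d) :
    ∃ E, ∀ x y, ∀ p ∈ L x y, d x p + d p y ≤ d x y + E := by
  obtain ⟨D, hD⟩ := hL.exists_isNearGeodesics hd
  refine ⟨2 * D, fun x y p hp => ?_⟩
  obtain ⟨q, hq, hpq⟩ := hD (d x y) x y le_rfl p hp
  unfold IsBetween at hq
  have := hd.triangle x q p
  have := hd.triangle p q y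
  have := hd.symm p q
  omega

theorem IsThinFamily.exists_isFourPoint (hL : IsThinFamily d L h) (hd : IsGeodesicDist d) :
    ∃ D, IsFourPoint d D := by
  obtain ⟨E, hE⟩ := hL.exists_add_le hd
  have add_le : ∀ {x y p q}, q ∈ L x y → d p q ≤ h → d x p + d p y ≤ d x y + E + 2 * h := by
    intro x y p q hq hpq
    have := hE x y q hq
    have := hd.triangle x q p
    have := hd.triangle p q y
    have := hd.symm p q
    omega
  refine ⟨2 * E + 4 * h, fun x y z w => ?_⟩
  obtain ⟨p, hp, q, hq, q', hq', hpq, hpq'⟩ := hL.center x w z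
  have hxpw := add_le hq hpq
  have hwpz := add_le hq' hpq'
  obtain ⟨p', hp', hpp'⟩ := hL.thin x y z p hp
  have := hd.triangle x p z
  have := hd.triangle y p w
  have := hd.symm p w
  have := hd.symm p y
  have := hd.symm w z
  rcases hp' with hp' | hp'
  · have := add_le hp' hpp'
    omega
  · have := add_le hp' hpp'
    omega

end Guessing

/-! ### Reduced words -/

section ReducedWord

variable {ι G : Type*} [Group G] {A : ι → Subgroup G} {C : Subgroup G} {i : ι}
  {s : Σ i, A i} {l l' w : List (Σ i, A i)} {f : ∀ i, A i → ℕ}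

/-- The element of `G` represented by a word whose letters are elements of the subgroups `A i`. -/
def wordProd (l : List (Σ i, A i)) : G :=
  (l.map fun s => (s.2 : G)).prod

@[simp]
theorem wordProd_nil : wordProd ([] : List (Σ i, A i)) = 1 :=
  rfl

@[simp]
theorem wordProd_cons : wordProd (s :: l) = s.2 * wordProd l :=
  List.prod_cons

theorem wordProd_append : wordProd (l ++ l') = wordProd l * wordProd l' := by
  rw [wordProd, List.map_append, List.prod_append, wordProd, wordProd]

/-- A word is reduced if no letter lies in `C` and adjacent letters come from subgroups with
different indices. -/
def IsReducedWord (C : Subgroup G) (l : List (Σ i, A i)) : Prop :=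
  (∀ s ∈ l, (s.2 : G) ∉ C) ∧ l.IsChain fun s t => s.1 ≠ t.1

/-- A reduced word, possibly empty, whose first letter does not come from `A i`. -/
def IsReducedAwayFrom (C : Subgroup G) (i : ι) (l : List (Σ i, A i)) : Prop :=
  IsReducedWord C l ∧ ∀ s ∈ l.head?, i ≠ s.1

theorem isReducedWord_nil : IsReducedWord C ([] : List (Σ i, A i)) := by
  simp [IsReducedWord]

theorem isReducedAwayFrom_nil : IsReducedAwayFrom C i ([] : List (Σ i, A i)) := by
  simp [IsReducedAwayFrom, isReducedWord_nil]

theorem isReducedWord_cons :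
    IsReducedWord C (s :: l) ↔ (s.2 : G) ∉ C ∧ IsReducedAwayFrom C s.1 l := by
  simp only [IsReducedWord, IsReducedAwayFrom, List.forall_mem_cons, List.isChain_cons]
  tauto

theorem isReducedAwayFrom_cons :
    IsReducedAwayFrom C i (s :: l) ↔ i ≠ s.1 ∧ IsReducedWord C (s :: l) := by
  simp [IsReducedAwayFrom, and_comm]

theorem IsReducedWord.isReducedAwayFrom_or_eq_cons (hl : IsReducedWord C l) (i : ι) :
    IsReducedAwayFrom C i l ∨
      ∃ (a : A i) (t : List (Σ i, A i)), l = ⟨i, a⟩ :: t ∧ IsReducedAwayFrom C i t := by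
  cases l with
  | nil => exact .inl isReducedAwayFrom_nil
  | cons s t =>
    by_cases his : i = s.1
    · subst his
      exact .inr ⟨s.2, t, rfl, (isReducedWord_cons.1 hl).2⟩
    · exact .inl (isReducedAwayFrom_cons.2 ⟨his, hl⟩)

theorem IsReducedAwayFrom.exists_wordProd_eq_inv_mul {a : A i} {t : List (Σ i, A i)}
    (hl : IsReducedAwayFrom C i l) (ht : IsReducedWord C (⟨i, a⟩ :: t)) :
    ∃ l' : List (Σ i, A i), l' ≠ [] ∧ IsReducedWord C l' ∧
      wordProd l' = (wordProd l)⁻¹ * wordProd (⟨i, a⟩ :: t) := by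
  induction l generalizing i a t with
  | nil => exact ⟨_, List.cons_ne_nil _ _, ht, by simp⟩
  | cons s l ih =>
    obtain ⟨his, hsl⟩ := isReducedAwayFrom_cons.1 hl
    obtain ⟨hs, hl⟩ := isReducedWord_cons.1 hsl
    have hst : IsReducedWord C (⟨s.1, s.2⁻¹⟩ :: ⟨i, a⟩ :: t) :=
      isReducedWord_cons.2 ⟨by simpa using hs, isReducedAwayFrom_cons.2 ⟨his.symm, ht⟩⟩
    obtain ⟨l', hne, hl', hprod⟩ := ih hl hst
    exact ⟨l', hne, hl', by rw [hprod]; simp [mul_assoc]⟩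

/-- The elements of `G` represented by the suffixes of a word. -/
def suffixProds (l : List (Σ i, A i)) : Set G :=
  wordProd '' {s | s <:+ l}

theorem suffixProds_nil : suffixProds ([] : List (Σ i, A i)) = {1} := by
  simp [suffixProds, List.suffix_nil]

theorem suffixProds_cons :
    suffixProds (s :: l) = insert (wordProd (s :: l)) (suffixProds l) := by
  simp only [suffixProds, List.suffix_cons_iff, Set.ofPred_or, Set.ofPred_eq_eq_singleton,
    Set.singleton_union, Set.image_insert_eq]

theorem wordProd_mem_suffixProds : wordProd l ∈ suffixProds l :=
  ⟨l, List.suffix_rfl, rfl⟩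

theorem mem_mul_suffixProds {c : G} (hc : c ∈ C) :
    c * wordProd l ∈ (C : Set G) * suffixProds l :=
  Set.mul_mem_mul hc wordProd_mem_suffixProds

theorem suffixProds_subset_cons : suffixProds l ⊆ suffixProds (s :: l) := by
  rw [suffixProds_cons]
  exact Set.subset_insert _ _

/-- The sum of the costs of the letters of a word. -/
def wordCost (f : ∀ i, A i → ℕ) (l : List (Σ i, A i)) : ℕ :=
  (l.map fun s => f s.1 s.2).sum

theorem wordCost_cons : wordCost f (s :: l) = f s.1 s.2 + wordCost f l :=
  List.sum_cons

theorem IsReducedAwayFrom.exists_isReducedWord_mul (hl : IsReducedAwayFrom C i l) (a : A i) :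
    ∃ c ∈ C, ∃ l' : List (Σ i, A i), IsReducedWord C l' ∧ c * wordProd l' = a * wordProd l ∧
      suffixProds l' ⊆ insert (wordProd l') (suffixProds l) ∧
      wordCost f l' ≤ f i a + wordCost f l := by
  by_cases ha : (a : G) ∈ C
  · exact ⟨a, ha, l, hl.1, rfl, Set.subset_insert _ _, Nat.le_add_left _ _⟩
  · exact ⟨1, one_mem _, ⟨i, a⟩ :: l, isReducedWord_cons.2 ⟨ha, hl⟩, by simp,
      suffixProds_cons.subset, wordCost_cons.le⟩

theorem IsReducedWord.exists_isReducedWord_mul (hl : IsReducedWord C l)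
    (hf : ∀ i a b, f i (a * b) ≤ f i a + f i b) (a : A i) :
    ∃ c ∈ C, ∃ l' : List (Σ i, A i), IsReducedWord C l' ∧ c * wordProd l' = a * wordProd l ∧
      suffixProds l' ⊆ insert (wordProd l') (suffixProds l) ∧
      wordCost f l' ≤ f i a + wordCost f l := by
  obtain hl | ⟨b, t, rfl, ht⟩ := hl.isReducedAwayFrom_or_eq_cons i
  · exact hl.exists_isReducedWord_mul a
  · obtain ⟨c, hc, l', hl', hprod, hsuff, hcost⟩ := ht.exists_isReducedWord_mul (f := f) (a * b)
    refine ⟨c, hc, l', hl', by simp [hprod, mul_assoc],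
      hsuff.trans (Set.insert_subset_insert suffixProds_subset_cons), ?_⟩
    have := hf i a b
    rw [wordCost_cons]
    dsimp only
    omega

theorem exists_isReducedWord_wordProd_eq {K : ℕ} (hCA : ∀ i, C ≤ A i)
    (hf : ∀ i a b, f i (a * b) ≤ f i a + f i b) (hK : ∀ i, ∀ c : A i, (c : G) ∈ C → f i c ≤ K)
    (w : List (Σ i, A i)) :
    ∃ c ∈ C, ∃ l : List (Σ i, A i), IsReducedWord C l ∧ c * wordProd l = wordProd w ∧
      suffixProds l ⊆ C * suffixProds w ∧ wordCost f l ≤ wordCost f w + K * w.length := by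
  induction w with
  | nil =>
    exact ⟨1, one_mem _, [], isReducedWord_nil, one_mul _,
      fun x hx => ⟨1, one_mem _, x, hx, one_mul _⟩, le_self_add⟩
  | cons s w ih =>
    obtain ⟨c, hc, l, hl, hprod, hsuff, hcost⟩ := ih
    obtain ⟨c', hc', l', hl', hprod', hsuff', hcost'⟩ :=
      hl.exists_isReducedWord_mul hf (s.2 * ⟨c, hCA s.1 hc⟩)
    have hsw : c' * wordProd l' = wordProd (s :: w) := by
      rw [hprod', wordProd_cons, ← hprod, Subgroup.coe_mul, mul_assoc]
    refine ⟨c', hc', l', hl', hsw, hsuff'.trans (Set.insert_subset ?_ ?_), ?_⟩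
    · rw [← inv_mul_cancel_left c' (wordProd l'), hsw]
      exact mem_mul_suffixProds (inv_mem hc')
    · exact hsuff.trans (Set.mul_subset_mul_left suffixProds_subset_cons)
    · have := hf s.1 s.2 ⟨c, hCA s.1 hc⟩
      have := hK s.1 ⟨c, hCA s.1 hc⟩ hc
      rw [wordCost_cons, List.length_cons, mul_add_one]
      omega

end ReducedWord

/-! ### Amalgams -/

section Amalgam

variable {ι G : Type*} [Group G] {A : ι → Subgroup G} {C : Subgroup G} {i : ι} {c : G}
  {l l' : List (Σ i, A i)}

/-- `G` is the amalgam of the subgroups `A i` along `C`, in terms of the normal form theorem: the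
`A i` generate `G`, and no nonempty reduced word represents `1`. -/
structure IsAmalgam (A : ι → Subgroup G) (C : Subgroup G) : Prop where
  le : ∀ i, C ≤ A i
  iSup_eq_top : ⨆ i, A i = ⊤
  wordProd_ne_one : ∀ l : List (Σ i, A i), IsReducedWord C l → l ≠ [] → wordProd l ≠ 1

open Monoid in
theorem IsAmalgamatedFreeProduct.isAmalgam {G : Type u} [Group G] {A B C : Subgroup G}
    (h : IsAmalgamatedFreeProduct A B C) : IsAmalgam (fun b => cond b A B) C where
  le := Bool.forall_bool.2 ⟨h.le_right, h.le_left⟩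
  iSup_eq_top := by rw [iSup_bool_eq]; exact h.sup_eq_top
  wordProd_ne_one l hl hne hprod := by
    have hC : ∀ b, C ≤ cond b A B := Bool.forall_bool.2 ⟨h.le_right, h.le_left⟩
    let φ : ∀ b, C →* (cond b A B : Subgroup G) := fun b => Subgroup.inclusion (hC b)
    obtain ⟨f, hfA, hfB⟩ := h.univ (PushoutI φ) (PushoutI.of (φ := φ) true)
      (PushoutI.of (φ := φ) false)
      fun c hA hB =>
        have hc : c ∈ C := h.inf_eq ▸ ⟨hA, hB⟩
        (PushoutI.of_apply_eq_base φ true ⟨c, hc⟩).trans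
          (PushoutI.of_apply_eq_base φ false ⟨c, hc⟩).symm
    have hf : ∀ s : Σ b, (cond b A B : Subgroup G), f s.2 = PushoutI.of (φ := φ) s.1 s.2 := by
      rintro ⟨_ | _, s⟩
      exacts [hfB s, hfA s]
    let w : CoprodI.Word fun b => (cond b A B : Subgroup G) :=
      ⟨l, fun s hs hs1 => hl.1 s hs (by rw [hs1]; exact C.one_mem), hl.2⟩
    have hw : PushoutI.Reduced φ w := by
      rintro s hs ⟨c, hc⟩
      exact hl.1 s hs (by rw [← hc]; exact c.2)
    have hwf : PushoutI.ofCoprodI w.prod = f (wordProd l) := by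
      simp [CoprodI.Word.prod, wordProd, w, map_list_prod, Function.comp_def, hf]
    have hempty := hw.eq_empty_of_mem_range (fun b => Subgroup.inclusion_injective (hC b))
      ⟨1, by rw [hwf, hprod, map_one, map_one]⟩
    exact hne (congrArg CoprodI.Word.toList hempty)

theorem IsAmalgam.mem_of_wordProd_eq (h : IsAmalgam A C) (hl : IsReducedAwayFrom C i l)
    (hl' : IsReducedAwayFrom C i l') {a : A i} (heq : wordProd l = a * wordProd l') :
    (a : G) ∈ C := by
  by_contra ha
  obtain ⟨w, hne, hw, hprod⟩ := hl.exists_wordProd_eq_inv_mul (isReducedWord_cons.2 ⟨ha, hl'⟩)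
  exact h.wordProd_ne_one w hw hne (by rw [hprod, wordProd_cons, heq, inv_mul_cancel])

theorem IsAmalgam.suffixProds_subset (h : IsAmalgam A C) (hl : IsReducedWord C l)
    (hl' : IsReducedWord C l') (hc : c ∈ C) (heq : wordProd l = c * wordProd l') :
    suffixProds l ⊆ C * suffixProds l' := by
  induction l generalizing l' c with
  | nil =>
    rw [suffixProds_nil, Set.singleton_subset_iff, ← wordProd_nil (A := A), heq]
    exact mem_mul_suffixProds hc
  | cons s t ih =>
    obtain ⟨hs, ht⟩ := isReducedWord_cons.1 hl
    rw [suffixProds_cons]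
    refine Set.insert_subset (heq ▸ mem_mul_suffixProds hc) ?_
    rw [wordProd_cons, ← eq_inv_mul_iff_mul_eq] at heq
    obtain hl' | ⟨b, t', rfl, ht'⟩ := hl'.isReducedAwayFrom_or_eq_cons s.1
    · have hcs : c⁻¹ * (s.2 : G) ∈ C := h.mem_of_wordProd_eq hl' ht
        (a := ⟨c, h.le _ hc⟩⁻¹ * s.2) (by simp [mul_assoc, heq])
      exact absurd (by simpa using mul_mem hc hcs) hs
    · have htt' : wordProd t = (s.2⁻¹ * ⟨c, h.le _ hc⟩ * b : A s.1) * wordProd t' := by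
        simp [mul_assoc, heq]
      exact (ih ht.1 ht'.1 (h.mem_of_wordProd_eq ht ht' htt') htt').trans
        (Set.mul_subset_mul_left suffixProds_subset_cons)

theorem IsAmalgam.exists_wordProd_eq (h : IsAmalgam A C) (g : G) :
    ∃ w : List (Σ i, A i), wordProd w = g := by
  refine Subgroup.iSup_induction A (C := fun g => ∃ w : List (Σ i, A i), wordProd w = g)
    (h.iSup_eq_top ▸ Subgroup.mem_top g) (fun i a ha => ⟨[⟨i, a, ha⟩], by simp⟩) ⟨[], rfl⟩ ?_
  rintro _ _ ⟨w, rfl⟩ ⟨w', rfl⟩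
  exact ⟨w ++ w', wordProd_append⟩

theorem IsAmalgam.exists_isReducedWord (h : IsAmalgam A C) (g : G) :
    ∃ c ∈ C, ∃ l : List (Σ i, A i), IsReducedWord C l ∧ c * wordProd l = g := by
  obtain ⟨w, rfl⟩ := h.exists_wordProd_eq g
  obtain ⟨c, hc, l, hl, hprod, -⟩ :=
    exists_isReducedWord_wordProd_eq h.le (f := 0) (K := 0) (by simp) (by simp) w
  exact ⟨c, hc, l, hl, hprod⟩

theorem IsAmalgam.exists_eq_mul_wordProd (h : IsAmalgam A C) (i : ι) (g : G) :
    ∃ (a : A i) (l : List (Σ i, A i)), IsReducedAwayFrom C i l ∧ g = a * wordProd l := by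
  obtain ⟨c, hc, l, hl, rfl⟩ := h.exists_isReducedWord g
  obtain hl | ⟨b, t, rfl, ht⟩ := hl.isReducedAwayFrom_or_eq_cons i
  · exact ⟨⟨c, h.le i hc⟩, l, hl, rfl⟩
  · exact ⟨⟨c, h.le i hc⟩ * b, t, ht, by simp [mul_assoc]⟩

end Amalgam

/-! ### Projections to the factors -/

section Projection

variable {ι G : Type*} [Group G] {A : ι → Subgroup G} {C : Subgroup G} {i j : ι} {g : G}
  {s : Σ i, A i} {l : List (Σ i, A i)} {r : G → A i}

/-- A left `A i`-equivariant map `G → A i` reading off the first letter in `A i` of a reduced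
word; it is the analogue of a nearest point projection to the vertex fixed by `A i`. -/
structure IsProjection (C : Subgroup G) (i : ι) (r : G → A i) : Prop where
  map_mul : ∀ (a : A i) (g : G), r (a * g) = a * r g
  exists_eq : ∀ g, ∃ l : List (Σ i, A i), IsReducedAwayFrom C i l ∧ g = r g * wordProd l

theorem IsAmalgam.exists_isProjection (h : IsAmalgam A C) (i : ι) :
    ∃ r : G → A i, IsProjection C i r := by
  choose a l hl hal using h.exists_eq_mul_wordProd i
  let q : G → G := fun g => (Quotient.mk (QuotientGroup.rightRel (A i)) g).out
  have hq : ∀ g, g * (q g)⁻¹ ∈ A i := fun g =>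
    QuotientGroup.rightRel_apply.1 (Quotient.mk_out (s := QuotientGroup.rightRel (A i)) g)
  have hq_mul : ∀ (b : A i) g, q (b * g) = q g := fun b g =>
    congrArg Quotient.out (Quotient.sound (QuotientGroup.rightRel_apply.2 (by simp)))
  refine ⟨fun g => ⟨g * (q g)⁻¹, hq g⟩ * a (q g), fun b g => ?_, fun g => ⟨l (q g), hl _, ?_⟩⟩
  · ext
    simp [hq_mul, mul_assoc]
  · simp [mul_assoc, ← hal]

theorem IsProjection.map_coe (hr : IsProjection C i r) (a : A i) : r a = a * r 1 := by
  rw [← hr.map_mul, mul_one]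

theorem IsProjection.wordProd_mem (hr : IsProjection C i r) (h : IsAmalgam A C)
    (hl : IsReducedAwayFrom C i l) : (r (wordProd l) : G) ∈ C := by
  obtain ⟨l', hl', heq⟩ := hr.exists_eq (wordProd l)
  exact h.mem_of_wordProd_eq hl hl' heq

theorem IsProjection.one_mem (hr : IsProjection C i r) (h : IsAmalgam A C) : (r 1 : G) ∈ C :=
  hr.wordProd_mem h isReducedAwayFrom_nil

theorem exists_isReducedAwayFrom_letter (his : i ≠ s.1) :
    ∃ c ∈ C, ∃ l : List (Σ i, A i), IsReducedAwayFrom C i l ∧ (s.2 : G) = c * wordProd l := by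
  by_cases hs : (s.2 : G) ∈ C
  · exact ⟨s.2, hs, [], isReducedAwayFrom_nil, by simp⟩
  · exact ⟨1, one_mem _, [s], isReducedAwayFrom_cons.2
      ⟨his, isReducedWord_cons.2 ⟨hs, isReducedAwayFrom_nil⟩⟩, by simp⟩

theorem IsReducedAwayFrom.exists_wordProd_mul_eq (hl : IsReducedAwayFrom C i l)
    (hCA : ∀ i, C ≤ A i) (hls : l ≠ [] ∨ i ≠ s.1) :
    ∃ c ∈ C, ∃ l' : List (Σ i, A i), IsReducedAwayFrom C i l' ∧
      wordProd l * s.2 = c * wordProd l' := by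
  induction l generalizing i with
  | nil => simpa using exists_isReducedAwayFrom_letter (hls.resolve_left (not_not.2 rfl))
  | cons b t ih =>
    obtain ⟨hib, hbt⟩ := isReducedAwayFrom_cons.1 hl
    obtain ⟨hb, ht⟩ := isReducedWord_cons.1 hbt
    by_cases hts : t ≠ [] ∨ b.1 ≠ s.1
    · obtain ⟨c, hc, l', hl', heq⟩ := ih ht hts
      refine ⟨1, one_mem _, ⟨b.1, b.2 * ⟨c, hCA _ hc⟩⟩ :: l', isReducedAwayFrom_cons.2
        ⟨hib, isReducedWord_cons.2 ⟨fun hbc => hb ?_, hl'⟩⟩, by simp [mul_assoc, heq]⟩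
      simpa using mul_mem hbc (inv_mem hc)
    · push Not at hts
      obtain ⟨rfl, hbs⟩ := hts
      obtain ⟨j, x⟩ := s
      subst hbs
      simpa using exists_isReducedAwayFrom_letter (s := ⟨b.1, b.2 * x⟩) hib

theorem IsProjection.inv_mul_mul_mem (hr : IsProjection C i r) (h : IsAmalgam A C)
    (hgs : g ∉ A i ∨ i ≠ s.1) : (((r g)⁻¹ * r (g * s.2) : A i) : G) ∈ C := by
  obtain ⟨l, hl, hg⟩ := hr.exists_eq g
  obtain ⟨l', hl', hgs'⟩ := hr.exists_eq (g * s.2)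
  have hls : l ≠ [] ∨ i ≠ s.1 := hgs.imp_left fun hgA hnil =>
    hgA (by rw [hg, hnil, wordProd_nil, mul_one]; exact (r g).2)
  obtain ⟨c, hc, l'', hl'', hprod⟩ := hl.exists_wordProd_mul_eq h.le hls
  have hmem : c⁻¹ * ((r g)⁻¹ * r (g * s.2) : G) ∈ C :=
    h.mem_of_wordProd_eq (a := ⟨c, h.le i hc⟩⁻¹ * ((r g)⁻¹ * r (g * s.2))) hl'' hl' <| by
      simp only [Subgroup.coe_mul, Subgroup.coe_inv, mul_assoc]
      rw [← hgs', eq_inv_mul_iff_mul_eq, ← hprod, eq_inv_mul_iff_mul_eq, ← mul_assoc, ← hg]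
  simpa using mul_mem hc hmem

theorem IsProjection.mem_of_ne (hr : IsProjection C i r) (h : IsAmalgam A C) {r' : G → A j}
    (hr' : IsProjection C j r') (hij : i ≠ j) {a : A i} (ha : (a : G) ∉ C)
    (hg : (r g : G) ∈ C) : (r' (a * g) : G) ∈ C := by
  obtain ⟨l, hl, heq⟩ := hr.exists_eq g
  have hag : (a : G) * g = wordProd (⟨i, a * r g⟩ :: l) := by
    rw [wordProd_cons, Subgroup.coe_mul, mul_assoc, ← heq]
  rw [hag]
  refine hr'.wordProd_mem h (isReducedAwayFrom_cons.2
    ⟨hij.symm, isReducedWord_cons.2 ⟨fun har => ha ?_, hl⟩⟩)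
  simpa using mul_mem har (inv_mem hg)

end Projection

/-! ### Finitely generated intersections -/

section FinitelyGenerated

variable {Γ Δ : Type*} [Group Γ] [Group Δ]

/-- The elements `t * b * t'⁻¹` of `K` with `t, t' ∈ T` and `b ∈ B` generate `K`, as in the
Milnor–Schwarz lemma. -/
theorem fg_of_reflTransGen {K : Subgroup Γ} {T B : Set Γ} (hT : T.Finite) (hB : B.Finite)
    (h : ∀ g ∈ K, Relation.ReflTransGen (fun a b => b ∈ (K : Set Γ) * T ∧ a⁻¹ * b ∈ B) 1 g) :
    K.FG := by
  set E : Set Γ := K ∩ (insert 1 T * insert 1 B * (insert 1 T)⁻¹)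
  have hEK : Subgroup.closure E ≤ K := (Subgroup.closure_le K).2 Set.inter_subset_left
  have hreach {g : Γ}
      (hg : Relation.ReflTransGen (fun a b => b ∈ (K : Set Γ) * T ∧ a⁻¹ * b ∈ B) 1 g) :
      ∃ k ∈ Subgroup.closure E, ∃ t ∈ insert 1 T, k * t = g := by
    induction hg with
    | refl => exact ⟨1, one_mem _, 1, Set.mem_insert _ _, one_mul 1⟩
    | tail _ hab ih =>
      obtain ⟨k, hk, t, ht, rfl⟩ := ih
      obtain ⟨⟨k', hk', t', ht', rfl⟩, hb⟩ := hab
      refine ⟨k', (mul_mem_cancel_left (inv_mem hk)).1 (Subgroup.subset_closure ⟨?_, ?_⟩), t',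
        Set.mem_insert_of_mem _ ht', rfl⟩
      · exact mul_mem (inv_mem (hEK hk)) hk'
      · convert Set.mul_mem_mul (Set.mul_mem_mul ht (Set.mem_insert_of_mem 1 hb))
          (Set.inv_mem_inv.2 (Set.mem_insert_of_mem 1 ht')) using 1
        group
  refine (Subgroup.fg_iff K).2 ⟨E, le_antisymm hEK fun g hg => ?_,
    (((hT.insert 1).mul (hB.insert 1)).mul (hT.insert 1).inv).inter_of_right _⟩
  obtain ⟨k, hk, t, ht, rfl⟩ := hreach (h g hg)
  refine mul_mem hk (Subgroup.subset_closure ⟨(mul_mem_cancel_left (hEK hk)).1 hg, ?_⟩)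
  simpa using Set.mul_mem_mul (Set.mul_mem_mul ht (Set.mem_insert 1 B))
    (Set.inv_mem_inv.2 (Set.mem_insert 1 T))

theorem exists_finite_preimage_mul_subset (f : Γ →* Δ) (H : Subgroup Δ) {F : Set Δ}
    (hF : F.Finite) : ∃ T : Set Γ, T.Finite ∧ f ⁻¹' (H * F) ⊆ H.comap f * T := by
  have hcoset (e : Δ) : ∃ t : Γ, ∀ a, ∀ k ∈ H, k * e = f a → a * t⁻¹ ∈ H.comap f := by
    by_cases he : ∃ t : Γ, ∃ k ∈ H, k * e = f t
    · obtain ⟨t, k, hk, ht⟩ := he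
      refine ⟨t, fun a k' hk' ha => ?_⟩
      rw [Subgroup.mem_comap, map_mul, map_inv, ← ha, ← ht]
      simpa [mul_assoc] using mul_mem hk' (inv_mem hk)
    · exact ⟨1, fun a k hk ha => absurd ⟨a, k, hk, ha⟩ he⟩
  choose t ht using hcoset
  refine ⟨t '' F, hF.image t, ?_⟩
  rintro a ⟨k, hk, e, he, ha⟩
  exact ⟨a * (t e)⁻¹, ht e a k hk ha, t e, Set.mem_image_of_mem t he, inv_mul_cancel_right _ _⟩

theorem fg_comap_mulEquiv (e : Γ ≃* Δ) {H : Subgroup Δ} (hH : H.FG) :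
    (H.comap (e : Γ →* Δ)).FG := by
  rw [Subgroup.fg_iff_submonoid_fg] at hH ⊢
  rw [Subgroup.comap_equiv_eq_map_symm]
  exact hH.map (e.symm : Δ →* Γ)

end FinitelyGenerated

section WordsNearSubgroup

variable {ι G : Type*} [Group G] {A : ι → Subgroup G} {C H : Subgroup G} {i : ι} {g p : G}
  {l l' : List (Σ i, A i)} {r : G → A i} {T : Set G} {F : Set (Σ i, A i)} {B : Set (A i)}

theorem finite_suffixProds (l : List (Σ i, A i)) : (suffixProds l).Finite := by
  induction l with
  | nil => simp [suffixProds_nil]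
  | cons s l ih => rw [suffixProds_cons]; exact ih.insert _

theorem suffixProds_append_subset :
    suffixProds (l ++ l') ⊆ suffixProds l * {wordProd l'} ∪ suffixProds l' := by
  induction l with
  | nil => exact Set.subset_union_right
  | cons s l ih =>
    rw [List.cons_append, suffixProds_cons, ← List.cons_append, wordProd_append]
    refine Set.insert_subset (.inl (Set.mul_mem_mul wordProd_mem_suffixProds rfl)) (ih.trans ?_)
    gcongr
    exact suffixProds_subset_cons

/-- The elements of a finitely generated subgroup `H` are represented by words which follow the
translates of a fixed path representing a generator, hence stay close to `H`. -/
theorem IsAmalgam.exists_words_near (h : IsAmalgam A C) (hH : H.FG) :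
    ∃ T : Set G, T.Finite ∧ 1 ∈ T ∧ ∃ F : Set (Σ i, A i), F.Finite ∧ ∀ g ∈ H,
      ∃ w : List (Σ i, A i), (∀ s ∈ w, s ∈ F) ∧ wordProd w = g ∧ suffixProds w ⊆ T * H := by
  obtain ⟨S, rfl, hS⟩ := (Subgroup.fg_iff H).1 hH
  choose w hw using h.exists_wordProd_eq
  have hSS : (S ∪ S⁻¹).Finite := hS.union hS.inv
  set T : Set G := insert 1 (⋃ y ∈ S ∪ S⁻¹, suffixProds (w y))
  set F : Set (Σ i, A i) := ⋃ y ∈ S ∪ S⁻¹, {s | s ∈ w y}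
  refine ⟨T, (hSS.biUnion fun y _ => finite_suffixProds (w y)).insert 1, Set.mem_insert _ _, F,
    hSS.biUnion fun y _ => (w y).finite_toSet, fun g hg => ?_⟩
  have hgen {y : G} (hy : y ∈ S ∪ S⁻¹) : ∃ v : List (Σ i, A i), (∀ s ∈ v, s ∈ F) ∧
      wordProd v = y ∧ suffixProds v ⊆ T * Subgroup.closure S :=
    ⟨w y, fun s hs => Set.mem_biUnion hy hs, hw y, fun x hx => ⟨x, .inr (Set.mem_biUnion hy hx),
      1, one_mem _, mul_one x⟩⟩
  induction hg using Subgroup.closure_induction'' with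
  | mem y hy => exact hgen (.inl hy)
  | inv_mem y hy => exact hgen (.inr (by simpa using hy))
  | one =>
    exact ⟨[], by simp, rfl, by simpa [suffixProds_nil] using
      ⟨1, Set.mem_insert 1 _, 1, one_mem (Subgroup.closure S), mul_one 1⟩⟩
  | mul _ _ _ hy ihx ihy =>
    obtain ⟨v, hvF, rfl, hv⟩ := ihx
    obtain ⟨v', hvF', rfl, hv'⟩ := ihy
    refine ⟨v ++ v', List.forall_mem_append.2 ⟨hvF, hvF'⟩, wordProd_append,
      suffixProds_append_subset.trans (Set.union_subset ?_ hv')⟩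
    calc suffixProds v * {wordProd v'} ⊆ T * Subgroup.closure S * (Subgroup.closure S : Set G) :=
          Set.mul_subset_mul hv (Set.singleton_subset_iff.2 hy)
      _ = T * Subgroup.closure S := by rw [mul_assoc, coe_mul_coe]

theorem IsProjection.mem_of_step (hr : IsProjection C i r) (h : IsAmalgam A C)
    (hBC : ∀ c : A i, (c : G) ∈ C → c ∈ B)
    (hBF : ∀ a : A i, ⟨i, a⟩ ∈ F → (r 1)⁻¹ * a * r 1 ∈ B) {s : Σ i, A i} (hs : s ∈ F)
    (hp : (r p : G) ∈ (H : Set G) * (T⁻¹ * C)) (hps : p * s.2 ∈ (H : Set G) * T⁻¹) :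
    (r (p * s.2) : G) ∈ (H : Set G) * (T⁻¹ * C) ∧ (r p)⁻¹ * r (p * s.2) ∈ B := by
  by_cases hpA : p ∈ A i ∧ i = s.1
  · obtain ⟨i', a⟩ := s
    obtain ⟨hpA, rfl⟩ := hpA
    lift p to A i using hpA
    constructor
    · rw [← Subgroup.coe_mul, hr.map_coe, Subgroup.coe_mul, ← mul_assoc]
      exact Set.mul_mem_mul hps (hr.one_mem h)
    · convert hBF a hs using 1
      rw [← Subgroup.coe_mul, hr.map_coe, hr.map_coe]
      group
  · have hC := hr.inv_mul_mul_mem h (not_and_or.1 hpA)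
    refine ⟨?_, hBC _ hC⟩
    rw [← mul_assoc, ← coe_mul_coe C, ← mul_assoc, mul_assoc (H : Set G)]
    simpa using Set.mul_mem_mul hp hC

theorem IsProjection.reflTransGen_map_mul_wordProd (hr : IsProjection C i r) (h : IsAmalgam A C)
    (hBC : ∀ c : A i, (c : G) ∈ C → c ∈ B)
    (hBF : ∀ a : A i, ⟨i, a⟩ ∈ F → (r 1)⁻¹ * a * r 1 ∈ B) {w : List (Σ i, A i)}
    (hwF : ∀ s ∈ w, s ∈ F) (hw : suffixProds w ⊆ T * H)
    (hp : (r p : G) ∈ (H : Set G) * (T⁻¹ * C)) (hpw : p * wordProd w ∈ H) :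
    Relation.ReflTransGen
      (fun a b : A i => (b : G) ∈ (H : Set G) * (T⁻¹ * C) ∧ a⁻¹ * b ∈ B)
      (r p) (r (p * wordProd w)) := by
  induction w generalizing p with
  | nil => rw [wordProd_nil, mul_one]
  | cons s w ih =>
    obtain ⟨hs, hwF⟩ := List.forall_mem_cons.1 hwF
    have hw' : suffixProds w ⊆ T * H := suffixProds_subset_cons.trans hw
    rw [wordProd_cons, ← mul_assoc p] at hpw ⊢
    have hps : p * s.2 ∈ (H : Set G) * T⁻¹ := by
      obtain ⟨t, ht, k, hk, htk⟩ := hw' wordProd_mem_suffixProds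
      refine ⟨p * s.2 * wordProd w * k⁻¹, mul_mem hpw (inv_mem hk), t⁻¹, Set.inv_mem_inv.2 ht, ?_⟩
      simp [← htk, mul_assoc]
    obtain ⟨hrps, hstep⟩ := hr.mem_of_step h hBC hBF hs hp hps
    exact .head ⟨hrps, hstep⟩ (ih hwF hw' hrps hpw)

theorem IsAmalgam.fg_subgroupOf (h : IsAmalgam A C) (hC : (C : Set G).Finite) (hH : H.FG)
    (i : ι) : (H.subgroupOf (A i)).FG := by
  obtain ⟨r, hr⟩ := h.exists_isProjection i
  obtain ⟨T, hT, hT1, F, hF, hwords⟩ := h.exists_words_near hH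
  obtain ⟨S, hS, hTS⟩ :=
    exists_finite_preimage_mul_subset (A i).subtype H (hT.inv.mul hC : (T⁻¹ * (C : Set G)).Finite)
  set B : Set (A i) := Subtype.val ⁻¹' C ∪
    (fun a => (r 1)⁻¹ * a * r 1) '' {a | ⟨i, a⟩ ∈ F}
  have hBfin : B.Finite := (hC.preimage Subtype.val_injective.injOn).union
    ((hF.preimage sigma_mk_injective.injOn).image _)
  have hr1 : (r 1 : G) ∈ (H : Set G) * (T⁻¹ * C) :=
    ⟨1, one_mem H, r 1, ⟨1, by simpa using hT1, r 1, hr.one_mem h, one_mul _⟩, one_mul _⟩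
  suffices hreach : ∀ g ∈ H.subgroupOf (A i), Relation.ReflTransGen
      (fun a b : A i => (b : G) ∈ (H : Set G) * (T⁻¹ * C) ∧ a⁻¹ * b ∈ B) 1 g from
    fg_of_reflTransGen hS hBfin fun g hg =>
      .mono (fun a b hab => ⟨hTS hab.1, hab.2⟩) _ _ (hreach g hg)
  intro g hg
  obtain ⟨w, hwF, hwg, hw⟩ := hwords g hg
  have hchain := hr.reflTransGen_map_mul_wordProd h (B := B) (fun c hc => .inl hc)
    (fun a ha => .inr ⟨a, ha, rfl⟩) hwF hw hr1 (by rwa [one_mul, hwg])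
  rw [one_mul, hwg, hr.map_coe] at hchain
  refine .head ⟨hr1, .inl ?_⟩ (hchain.tail ⟨?_, .inl ?_⟩)
  · simpa using hr.one_mem h
  · exact ⟨g, hg, 1, ⟨1, by simpa using hT1, 1, one_mem C, one_mul 1⟩, mul_one _⟩
  · simpa using hr.one_mem h

end WordsNearSubgroup

/-! ### Property (Q) -/

section LetterGen

variable {ι G : Type*} [Group G] {A : ι → Subgroup G} {C : Subgroup G} {X : ∀ i, Set (A i)}

/-- The union in `G` of the sets `X i`. It generates an amalgam of the `A i` as soon as each `X i`
generates `A i`. -/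
def unionGen (X : ∀ i, Set (A i)) : Set G :=
  ⋃ i, (↑) '' X i

theorem mem_unionGen {g : G} : g ∈ unionGen X ↔ ∃ i, ∃ a ∈ X i, (a : G) = g := by
  simp only [unionGen, Set.mem_iUnion, Set.mem_image]

theorem IsAmalgam.isSymmGen_unionGen [Finite ι] (h : IsAmalgam A C) (hX : ∀ i, IsSymmGen (X i)) :
    IsSymmGen (unionGen X) := by
  refine ⟨Set.finite_iUnion fun i => (hX i).1.image _, fun g hg => ?_, ?_⟩
  · obtain ⟨i, a, ha, rfl⟩ := mem_unionGen.1 hg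
    exact mem_unionGen.2 ⟨i, a⁻¹, (hX i).2.1 a ha, rfl⟩
  · have hclosure (i : ι) : Subgroup.closure ((↑) '' X i : Set G) = A i := by
      rw [← Subgroup.coe_subtype, ← MonoidHom.map_closure, (hX i).2.2, ← MonoidHom.range_eq_map,
        Subgroup.range_subtype]
    simp only [unionGen, Subgroup.closure_iUnion, hclosure, h.iSup_eq_top]

theorem IsWordOver.exists_wordProd_eq {l : List G} (hl : IsWordOver (unionGen X) l) :
    ∃ w : List (Σ i, A i), (∀ s ∈ w, s.2 ∈ X s.1) ∧ wordProd w = l.prod ∧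
      w.length = l.length := by
  induction l with
  | nil => exact ⟨[], by simp⟩
  | cons g l ih =>
    obtain ⟨hg, hl'⟩ := List.forall_mem_cons.1 hl
    obtain ⟨i, a, ha, rfl⟩ := mem_unionGen.1 hg
    obtain ⟨w, hw, hprod, hlen⟩ := ih hl'
    exact ⟨⟨i, a⟩ :: w, List.forall_mem_cons.2 ⟨ha, hw⟩, by simp [hprod], by simp [hlen]⟩

end LetterGen

section PropertyQ

variable {ι : Type*} {G : Type u} [Group G] {A : ι → Subgroup G} {C H : Subgroup G}
  {l w : List (Σ i, A i)} {f : ∀ i, A i → ℕ} {T : Set G}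

theorem IsAmalgam.suffixProds_subset_of_isReducedWord (h : IsAmalgam A C)
    (hl : IsReducedWord C l) {c : G} (hc : c ∈ C) (heq : c * wordProd l = wordProd w) :
    suffixProds l ⊆ C * suffixProds w := by
  obtain ⟨c', hc', l', hl', hprod, hsuff, -⟩ :=
    exists_isReducedWord_wordProd_eq h.le (f := 0) (K := 0) (by simp) (by simp) w
  calc suffixProds l ⊆ C * suffixProds l' :=
        h.suffixProds_subset hl hl' (mul_mem (inv_mem hc) hc')
          (by rw [mul_assoc, hprod, ← heq, inv_mul_cancel_left])
    _ ⊆ C * (C * suffixProds w) := by gcongr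
    _ = C * suffixProds w := by rw [← mul_assoc, coe_mul_coe]

theorem wordCost_le {K : ℕ} (hK : ∀ s ∈ w, f s.1 s.2 ≤ K) : wordCost f w ≤ K * w.length := by
  simpa [wordCost, mul_comm] using
    List.sum_le_card_nsmul (w.map fun s => f s.1 s.2) K (List.forall_mem_map.2 hK)

theorem IsAmalgam.exists_wordLength_le_of_mul_eq (h : IsAmalgam A C) (hC : (C : Set G).Finite)
    (hH : H.FG) {Y : Set H} (hY : IsSymmGen Y) {i : ι} (hQ : HasPropertyQ (A i))
    {X : Set (A i)} (hX : IsSymmGen X) (t t' : G) :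
    ∃ K : ℕ, ∀ (k : H) (a : A i), t * k = a * t' → wordLength Y k ≤ K * (wordLength X a + 1) := by
  by_cases hka : ∃ (k : H) (a : A i), t * k = a * t'
  swap
  · exact ⟨0, fun k a hk => absurd ⟨k, a, hk⟩ hka⟩
  obtain ⟨k₀, a₀, hk₀⟩ := hka
  let ψ : A i →* G := ((MulAut.conj t⁻¹ : G ≃* G) : G →* G).comp (A i).subtype
  have hP : (H.comap ψ).FG := h.fg_subgroupOf hC (fg_comap_mulEquiv (MulAut.conj t⁻¹) hH) i
  obtain ⟨K, hK⟩ := (hQ _ hP).exists_wordLength_map_le hX hY (ψ.subgroupComap H)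
  refine ⟨K * (wordLength X a₀ + 1) + wordLength Y k₀, fun k a hk => ?_⟩
  have hψ : ψ (a * a₀⁻¹) = (k * k₀⁻¹ : H) := by
    have ha : (a : G) = t * k * t'⁻¹ := by rw [hk, mul_inv_cancel_right]
    have ha₀ : (a₀ : G) = t * k₀ * t'⁻¹ := by rw [hk₀, mul_inv_cancel_right]
    simp [ψ, ha, ha₀, mul_assoc]
  have hmem : a * a₀⁻¹ ∈ H.comap ψ := by
    rw [Subgroup.mem_comap, hψ]
    exact SetLike.coe_mem _
  have hkk₀ : ψ.subgroupComap H ⟨a * a₀⁻¹, hmem⟩ = k * k₀⁻¹ := Subtype.ext hψ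
  have haa₀ : wordLength X (a * a₀⁻¹) ≤ wordLength X a + wordLength X a₀ := by
    simpa only [hX.wordLength_inv] using hX.wordLength_mul_le a a₀⁻¹
  calc wordLength Y k ≤ wordLength Y (k * k₀⁻¹) + wordLength Y k₀ := by
        simpa using hY.wordLength_mul_le (k * k₀⁻¹) k₀
    _ ≤ K * (wordLength X (a * a₀⁻¹) + 1) + wordLength Y k₀ := by
        gcongr
        exact hkk₀ ▸ hK ⟨a * a₀⁻¹, hmem⟩
    _ ≤ K * ((wordLength X a₀ + 1) * (wordLength X a + 1)) +
          wordLength Y k₀ * (wordLength X a + 1) := by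
        gcongr
        · nlinarith
        · exact Nat.le_mul_of_pos_right _ (Nat.succ_pos _)
    _ = _ := by ring

theorem exists_wordLength_le_wordCost {Y : Set H} (hY : IsSymmGen Y) (hT : T.Finite) {K : ℕ}
    (hK : ∀ i, ∀ t ∈ T, ∀ t' ∈ T, ∀ (k : H) (a : A i), t * k = a * t' →
      wordLength Y k ≤ K * f i a) :
    ∃ K' : ℕ, ∀ l : List (Σ i, A i), suffixProds l ⊆ T * H → ∀ t ∈ T, ∀ k : H,
      wordProd l = t * k → wordLength Y k ≤ K * wordCost f l + K' := by
  obtain ⟨K', hK'⟩ := exists_nat_bound_of_finite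
    (hT.inv.preimage (Subtype.val_injective (p := (· ∈ H))).injOn) (wordLength Y)
  refine ⟨K', fun l hl => ?_⟩
  induction l with
  | nil =>
    intro t ht k htk
    refine (hK' k ?_).trans (Nat.le_add_left _ _)
    rw [Set.mem_preimage, eq_inv_of_mul_eq_one_right htk.symm]
    exact Set.inv_mem_inv.2 ht
  | cons s l ih =>
    intro t ht k htk
    have hl' : suffixProds l ⊆ T * H := suffixProds_subset_cons.trans hl
    obtain ⟨t', ht', k', hk', hl_eq⟩ := hl' wordProd_mem_suffixProds
    lift k' to H using hk'
    have hstep : wordLength Y (k * k'⁻¹) ≤ K * f s.1 s.2 := by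
      refine hK s.1 t ht t' ht' (k * k'⁻¹) s.2 ?_
      rw [Subgroup.coe_mul, ← mul_assoc, ← htk, wordProd_cons, ← hl_eq]
      simp [mul_assoc]
    calc wordLength Y k ≤ wordLength Y (k * k'⁻¹) + wordLength Y k' := by
          simpa using hY.wordLength_mul_le (k * k'⁻¹) k'
      _ ≤ K * f s.1 s.2 + (K * wordCost f l + K') := add_le_add hstep (ih hl' t' ht' k' hl_eq.symm)
      _ = K * wordCost f (s :: l) + K' := by rw [wordCost_cons]; ring

theorem IsAmalgam.exists_wordLength_le_of_mul_eq_uniform [Finite ι] (h : IsAmalgam A C)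
    (hC : (C : Set G).Finite) (hH : H.FG) {Y : Set H} (hY : IsSymmGen Y)
    (hQ : ∀ i, HasPropertyQ (A i)) {X : ∀ i, Set (A i)} (hX : ∀ i, IsSymmGen (X i))
    (hT : T.Finite) :
    ∃ K : ℕ, ∀ i, ∀ t ∈ T, ∀ t' ∈ T, ∀ (k : H) (a : A i), t * k = a * t' →
      wordLength Y k ≤ K * (wordLength (X i) a + 1) := by
  choose K hK using fun i => h.exists_wordLength_le_of_mul_eq hC hH hY (hQ i) (hX i)
  obtain ⟨M, hM⟩ := exists_nat_bound_of_finite ((Set.finite_univ (α := ι)).prod (hT.prod hT))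
    fun x => K x.1 x.2.1 x.2.2
  refine ⟨M, fun i t ht t' ht' k a hka => (hK i t t' k a hka).trans ?_⟩
  gcongr
  exact hM (i, t, t') ⟨trivial, ht, ht'⟩

theorem IsAmalgam.exists_isReducedWord_wordCost_le [Finite ι] (h : IsAmalgam A C)
    (hC : (C : Set G).Finite) {X : ∀ i, Set (A i)} (hX : ∀ i, IsSymmGen (X i)) :
    ∃ K : ℕ, ∀ g : G, ∃ c ∈ C, ∃ l : List (Σ i, A i), IsReducedWord C l ∧ c * wordProd l = g ∧
      wordCost (fun i a => wordLength (X i) a + 1) l ≤ K * wordLength (unionGen X) g := by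
  choose K hK using fun i => exists_nat_bound_of_finite
    (hC.preimage (Subtype.val_injective (p := (· ∈ A i))).injOn) fun c => wordLength (X i) c + 1
  obtain ⟨M, hM⟩ := Finite.exists_le K
  refine ⟨2 + M, fun g => ?_⟩
  obtain ⟨z, hz, rfl⟩ := (h.isSymmGen_unionGen hX).exists_isGeodesicWord g
  obtain ⟨w, hwX, hwz, hlen⟩ := hz.1.exists_wordProd_eq
  obtain ⟨c, hc, l, hl, hprod, -, hcost⟩ :=
    exists_isReducedWord_wordProd_eq h.le (f := fun i a => wordLength (X i) a + 1) (K := M)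
      (fun i a b => by have := (hX i).wordLength_mul_le a b; omega)
      (fun i c hc => (hK i c hc).trans (hM i)) w
  have hw : wordCost (fun i a => wordLength (X i) a + 1) w ≤ 2 * w.length :=
    wordCost_le fun s hs => Nat.succ_le_succ (wordLength_le_one (hwX s hs))
  refine ⟨c, hc, l, hl, hprod.trans hwz, ?_⟩
  rw [← hz.2, ← hlen, add_mul]
  omega

theorem IsAmalgam.hasPropertyQ [Finite ι] (h : IsAmalgam A C) (hC : (C : Set G).Finite)
    (hA : ∀ i, Group.FG (A i)) (hQ : ∀ i, HasPropertyQ (A i)) : HasPropertyQ G := by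
  intro H hH
  have hHfg : Group.FG H := (Group.fg_iff_subgroup_fg H).2 hH
  obtain ⟨Y, hY⟩ := exists_isSymmGen H
  choose X hX using fun i => exists_isSymmGen (A i)
  obtain ⟨T, hT, hT1, _, _, hwords⟩ := h.exists_words_near hH
  have hCT : ((C : Set G) * T).Finite := hC.mul hT
  obtain ⟨K₀, hK₀⟩ := h.exists_isReducedWord_wordCost_le hC hX
  obtain ⟨K₁, hK₁⟩ := h.exists_wordLength_le_of_mul_eq_uniform hC hH hY hQ hX hCT
  obtain ⟨K₂, hK₂⟩ := exists_wordLength_le_wordCost hY hCT hK₁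
  refine isQuasiconvex_of_wordLength_le hY (h.isSymmGen_unionGen hX) (K := K₁ * K₀ + K₂)
    fun k => ?_
  obtain ⟨c, hc, l, hl, hlk, hcost⟩ := hK₀ k
  obtain ⟨w, -, hwk, hw⟩ := hwords k k.2
  have hlT : suffixProds l ⊆ C * T * H :=
    calc suffixProds l ⊆ C * suffixProds w :=
          h.suffixProds_subset_of_isReducedWord hl hc (hlk.trans hwk.symm)
      _ ⊆ C * (T * H) := by gcongr
      _ = C * T * H := (mul_assoc _ _ _).symm
  have hcT : c⁻¹ ∈ (C : Set G) * T := ⟨c⁻¹, inv_mem hc, 1, hT1, mul_one _⟩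
  calc wordLength Y k ≤ K₁ * wordCost (fun i a => wordLength (X i) a + 1) l + K₂ :=
        hK₂ l hlT c⁻¹ hcT k (eq_inv_mul_iff_mul_eq.2 hlk)
    _ ≤ K₁ * (K₀ * wordLength (unionGen X) (k : G)) + K₂ := by gcongr
    _ ≤ (K₁ * K₀ + K₂) * (wordLength (unionGen X) (k : G) + 1) := by nlinarith

end PropertyQ

/-! ### Hyperbolicity -/

theorem exists_of_reflTransGen_of_cover {V : Type*} {R : V → V → Prop} {P Q : V → Prop} {x y : V}
    (hxy : Relation.ReflTransGen R x y) (hx : P x) (hy : Q y) (hPQ : ∀ p q, R p q → P q ∨ Q q) :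
    ∃ p, P p ∧ (Q p ∨ ∃ q, R p q ∧ Q q) := by
  induction hxy using Relation.ReflTransGen.head_induction_on with
  | refl => exact ⟨y, hx, .inl hy⟩
  | @head x z hxz _ ih =>
    rcases hPQ x z hxz with hz | hz
    · exact ih hz
    · exact ⟨x, hx, .inr ⟨z, hxz, hz⟩⟩

section Hyperbolic

variable {ι G : Type*} [Group G] {A : ι → Subgroup G} {C : Subgroup G} {X : ∀ i, Set (A i)}
  {r : ∀ i, G → A i} {D E M : ℕ} {i : ι} {p v x y : G}

/-- A coarse model of the union of the geodesics from `x` to `y`, relative to projections `r i` of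
`G` to the subgroups `A i`. Besides the endpoints, it contains the points `p` that lie on a geodesic
of some coset `p * A i` joining the projections of `x` and `y` to that coset, provided the two
projections differ modulo `C`. -/
def projSegment (X : ∀ i, Set (A i)) (C : Subgroup G) (r : ∀ i, G → A i) (x y : G) : Set G :=
  {p | p = x ∨ p = y ∨ ∃ i, (((r i (p⁻¹ * x))⁻¹ * r i (p⁻¹ * y) : A i) : G) ∉ C ∧
    IsBetween (wordDist (X i)) (r i (p⁻¹ * x)) 1 (r i (p⁻¹ * y))}

theorem left_mem_projSegment : x ∈ projSegment X C r x y :=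
  .inl rfl

theorem right_mem_projSegment : y ∈ projSegment X C r x y :=
  .inr (.inl rfl)

theorem IsProjection.mul_mem_projSegment (hr : IsProjection C i (r i)) {e : A i}
    (hC : (((r i (v⁻¹ * x))⁻¹ * r i (v⁻¹ * y) : A i) : G) ∉ C)
    (he : IsBetween (wordDist (X i)) (r i (v⁻¹ * x)) e (r i (v⁻¹ * y))) :
    v * e ∈ projSegment X C r x y := by
  have hre (z : G) : r i ((v * e)⁻¹ * z) = e⁻¹ * r i (v⁻¹ * z) := by
    rw [← hr.map_mul, Subgroup.coe_inv, mul_inv_rev, mul_assoc]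
  refine .inr (.inr ⟨i, ?_, ?_⟩)
  · rwa [hre, hre, mul_inv_rev, inv_inv, mul_assoc, mul_inv_cancel_left]
  · unfold IsBetween at *
    rwa [hre, hre, ← inv_mul_cancel e, wordDist_mul_left, wordDist_mul_left, wordDist_mul_left]

theorem IsProjection.wordLength_le_of_isBetween {Y : Set (A i)} {q : G → A i}
    (hq : IsProjection C i q) (h : IsAmalgam A C) (hY : IsSymmGen Y)
    (hM : ∀ c : A i, (c : G) ∈ C → wordLength Y c ≤ M) {g s : A i} (hs : s ∈ Y)
    (hgs : IsBetween (wordDist Y) (q g) 1 (q (g * s))) : wordLength Y g ≤ 3 * M + 1 := by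
  have hc := hM (q 1) (hq.one_mem h)
  have hg : wordLength Y g ≤ wordDist Y (q g) 1 + wordLength Y (q 1) := by
    rw [hY.isGeodesicDist.symm, wordDist, inv_one, one_mul, ← hY.wordLength_inv (q 1)]
    simpa [hq.map_coe] using hY.wordLength_mul_le (g * q 1) (q 1)⁻¹
  have hconj : wordDist Y (q g) (q (g * s)) ≤
      wordLength Y (q 1)⁻¹ + (wordLength Y s + wordLength Y (q 1)) := by
    have hqgs : (q g)⁻¹ * q (g * s) = (q 1)⁻¹ * (s * q 1) := by
      rw [← Subgroup.coe_mul, hq.map_coe, hq.map_coe (g * s)]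
      group
    rw [wordDist, hqgs]
    exact (hY.wordLength_mul_le _ _).trans (by gcongr; exact hY.wordLength_mul_le _ _)
  rw [hY.wordLength_inv] at hconj
  have := wordLength_le_one hs
  unfold IsBetween at hgs
  omega

theorem IsFourPoint.exists_side {Y : Set (A i)} (hD : IsFourPoint (wordDist Y) D)
    (hY : IsSymmGen Y) (hM : ∀ c : A i, (c : G) ∈ C → wordLength Y c ≤ M) {a c : A i}
    (hac : ((a⁻¹ * c : A i) : G) ∉ C) (h : IsBetween (wordDist Y) a 1 c) (b : A i) :
    ((a⁻¹ * b : A i) : G) ∉ C ∧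
        wordDist Y a 1 + wordDist Y 1 b ≤ wordDist Y a b + (2 * M + D) ∨
      ((b⁻¹ * c : A i) : G) ∉ C ∧
        wordDist Y b 1 + wordDist Y 1 c ≤ wordDist Y b c + (2 * M + D) := by
  have hd := hY.isGeodesicDist
  have hside := hD.add_le_or_add_le hd h b
  have hmul : ((a⁻¹ * b : A i) : G) * ((b⁻¹ * c : A i) : G) = ((a⁻¹ * c : A i) : G) := by
    rw [← Subgroup.coe_mul, mul_assoc, mul_inv_cancel_left]
  have htri := hd.triangle a b c
  have hsymm := hd.symm b 1
  unfold IsBetween at h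
  by_cases hab : ((a⁻¹ * b : A i) : G) ∈ C
  · have hbc : ((b⁻¹ * c : A i) : G) ∉ C := fun hbc => hac (hmul ▸ mul_mem hab hbc)
    have habM : wordDist Y a b ≤ M := hM _ hab
    have htri' := hd.triangle b a 1
    have hsymm' := hd.symm a b
    exact .inr ⟨hbc, by omega⟩
  by_cases hbc : ((b⁻¹ * c : A i) : G) ∈ C
  · have hbcM : wordDist Y b c ≤ M := hM _ hbc
    have htri' := hd.triangle 1 c b
    have hsymm' := hd.symm b c
    exact .inl ⟨hab, by omega⟩
  · exact hside.imp (fun hside => ⟨hab, by omega⟩) fun hside => ⟨hbc, by omega⟩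

variable [Finite ι]

theorem IsAmalgam.wordLength_unionGen_le (h : IsAmalgam A C) (hX : ∀ i, IsSymmGen (X i))
    (a : A i) : wordLength (unionGen X) (a : G) ≤ wordLength (X i) a := by
  simpa using (hX i).wordLength_map_le (h.isSymmGen_unionGen hX) (A i).subtype (K := 1)
    (fun b hb => wordLength_le_one (mem_unionGen.2 ⟨i, b, hb, rfl⟩)) a

theorem IsAmalgam.wordDist_unionGen_mul_le (h : IsAmalgam A C) (hX : ∀ i, IsSymmGen (X i))
    (v : G) (a b : A i) :
    wordDist (unionGen X) (v * a) (v * b) ≤ wordDist (X i) a b := by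
  rw [wordDist_mul_left]
  exact h.wordLength_unionGen_le hX (a⁻¹ * b)

theorem IsAmalgam.wordDist_le_of_mem_projSegment (h : IsAmalgam A C)
    (hX : ∀ i, IsSymmGen (X i)) (hr : ∀ i, IsProjection C i (r i))
    (hM : ∀ i, ∀ c : A i, (c : G) ∈ C → wordLength (X i) c ≤ M)
    (hxy : wordDist (unionGen X) x y ≤ 1) (hp : p ∈ projSegment X C r x y) :
    wordDist (unionGen X) x p ≤ 3 * M + 1 := by
  have hZ := h.isSymmGen_unionGen hX
  have hd := hZ.isGeodesicDist
  rcases hp with rfl | rfl | ⟨i, hC, hp⟩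
  · rw [hd.self]
    exact Nat.zero_le _
  · omega
  obtain hxy | hxy := hZ.eq_one_or_mem_of_wordLength_le_one hxy
  · rw [inv_mul_eq_one] at hxy
    simp [hxy] at hC
  obtain ⟨j, s, hs, hxs⟩ := mem_unionGen.1 hxy
  have hps : p⁻¹ * y = p⁻¹ * x * s := by rw [hxs, mul_assoc, mul_inv_cancel_left]
  rw [hps] at hC hp
  obtain ⟨hg, rfl⟩ : p⁻¹ * x ∈ A i ∧ i = j := by
    by_contra! hne
    exact hC ((hr i).inv_mul_mul_mem h (s := ⟨j, s⟩) (or_iff_not_imp_left.2 fun hg =>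
      hne (not_not.1 hg)))
  rw [hd.symm]
  exact (h.wordLength_unionGen_le hX ⟨p⁻¹ * x, hg⟩).trans
    ((hr i).wordLength_le_of_isBetween h (hX i) (hM i) hs hp)

theorem IsAmalgam.exists_mem_projSegment (h : IsAmalgam A C) (hX : ∀ i, IsSymmGen (X i))
    (hr : IsProjection C i (r i)) (hD : IsFourPoint (wordDist (X i)) D)
    (hC : (((r i (p⁻¹ * x))⁻¹ * r i (p⁻¹ * y) : A i) : G) ∉ C)
    (hp : wordDist (X i) (r i (p⁻¹ * x)) 1 + wordDist (X i) 1 (r i (p⁻¹ * y)) ≤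
      wordDist (X i) (r i (p⁻¹ * x)) (r i (p⁻¹ * y)) + E) :
    ∃ q ∈ projSegment X C r x y, wordDist (unionGen X) p q ≤ E + D := by
  obtain ⟨e, he, hep⟩ := hD.exists_between_near (hX i).isGeodesicDist hp
  refine ⟨p * e, hr.mul_mem_projSegment hC he, ?_⟩
  rw [(hX i).isGeodesicDist.symm] at hep
  simpa using (h.wordDist_unionGen_mul_le hX p 1 e).trans hep

theorem IsAmalgam.exists_near_of_mem_projSegment (h : IsAmalgam A C)
    (hX : ∀ i, IsSymmGen (X i)) (hr : ∀ i, IsProjection C i (r i))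
    (hD : ∀ i, IsFourPoint (wordDist (X i)) D)
    (hM : ∀ i, ∀ c : A i, (c : G) ∈ C → wordLength (X i) c ≤ M) (x y z : G)
    (hp : p ∈ projSegment X C r x z) :
    ∃ q, (q ∈ projSegment X C r x y ∨ q ∈ projSegment X C r y z) ∧
      wordDist (unionGen X) p q ≤ 2 * M + 2 * D := by
  have hd := (h.isSymmGen_unionGen hX).isGeodesicDist
  rcases hp with rfl | rfl | ⟨i, hC, hp⟩
  · exact ⟨p, .inl left_mem_projSegment, by simp [hd.self]⟩
  · exact ⟨p, .inr right_mem_projSegment, by simp [hd.self]⟩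
  rcases (hD i).exists_side (hX i) (hM i) hC hp (r i (p⁻¹ * y)) with ⟨hC', hp'⟩ | ⟨hC', hp'⟩
  · obtain ⟨q, hq, hpq⟩ := h.exists_mem_projSegment hX (hr i) (hD i) hC' hp'
    exact ⟨q, .inl hq, by omega⟩
  · obtain ⟨q, hq, hpq⟩ := h.exists_mem_projSegment hX (hr i) (hD i) hC' hp'
    exact ⟨q, .inr hq, by omega⟩

theorem IsAmalgam.reflTransGen_mul_projection (h : IsAmalgam A C) (hX : ∀ i, IsSymmGen (X i))
    (hr : IsProjection C i (r i))
    (hC : (((r i (v⁻¹ * x))⁻¹ * r i (v⁻¹ * y) : A i) : G) ∉ C) :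
    Relation.ReflTransGen (fun p q => q ∈ projSegment X C r x y ∧ wordDist (unionGen X) p q ≤ 1)
      (v * r i (v⁻¹ * x)) (v * r i (v⁻¹ * y)) :=
  ((hX i).isGeodesicDist.reflTransGen_between _ _).lift (fun a : A i => v * a) fun a b hab =>
    ⟨hr.mul_mem_projSegment hC hab.1, (h.wordDist_unionGen_mul_le hX v a b).trans hab.2⟩

/-- The first letter `b` of the word `l`, in `A i`, moves the chain through the coset `v * A i`;
after that `v * b` takes over the role of `v`. -/
theorem IsAmalgam.reflTransGen_projSegment_of_isReducedWord (h : IsAmalgam A C)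
    (hX : ∀ i, IsSymmGen (X i)) (hr : ∀ i, IsProjection C i (r i))
    (hM : ∀ c ∈ C, wordLength (unionGen X) c ≤ M) {l : List (Σ i, A i)}
    (hl : IsReducedWord C l) (hv : ∀ s ∈ l.head?, (r s.1 (v⁻¹ * x) : G) ∈ C)
    (hy : v⁻¹ * y = wordProd l) {u : G} (huv : wordDist (unionGen X) u v ≤ M) :
    Relation.ReflTransGen (fun p q => q ∈ projSegment X C r x y ∧
      wordDist (unionGen X) p q ≤ 2 * M + 1) u y := by
  have hd := (h.isSymmGen_unionGen hX).isGeodesicDist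
  have hM' (v c : G) (hc : c ∈ C) : wordDist (unionGen X) v (v * c) ≤ M := by
    rw [wordDist, inv_mul_cancel_left]
    exact hM c hc
  induction l generalizing u v with
  | nil =>
    obtain rfl : v = y := inv_mul_eq_one.1 hy
    exact .single ⟨right_mem_projSegment, by omega⟩
  | cons s l ih =>
    obtain ⟨i, b⟩ := s
    obtain ⟨hb, hl⟩ := isReducedWord_cons.1 hl
    replace hv : (r i (v⁻¹ * x) : G) ∈ C := hv _ rfl
    have hc : (r i (wordProd l) : G) ∈ C := (hr i).wordProd_mem h hl
    have hry : r i (v⁻¹ * y) = b * r i (wordProd l) := by rw [hy, wordProd_cons, (hr i).map_mul]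
    have hC : (((r i (v⁻¹ * x))⁻¹ * r i (v⁻¹ * y) : A i) : G) ∉ C := by
      rwa [hry, Subgroup.coe_mul, Subgroup.coe_mul, C.mul_mem_cancel_left (by simpa using hv),
        C.mul_mem_cancel_right hc]
    have hstart : v * r i (v⁻¹ * x) ∈ projSegment X C r x y :=
      (hr i).mul_mem_projSegment hC ((hX i).isGeodesicDist.isBetween_left _ _)
    have hstep := (hd.triangle u v _).trans (add_le_add huv (hM' v _ hv))
    have hchain := h.reflTransGen_mul_projection hX (hr i) hC
    have hnext : ∀ t ∈ l.head?, (r t.1 ((v * b)⁻¹ * x) : G) ∈ C := fun t ht => by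
      rw [mul_inv_rev, mul_assoc]
      exact (hr i).mem_of_ne h (hr t.1) (hl.2 t ht) (a := b⁻¹) (by simpa using hb) hv
    have hend : wordDist (unionGen X) (v * r i (v⁻¹ * y)) (v * b) ≤ M := by
      rw [hd.symm, hry, Subgroup.coe_mul, ← mul_assoc]
      exact hM' _ _ hc
    have htail := ih hl.1 hnext
      (by rw [mul_inv_rev, mul_assoc, hy, wordProd_cons, inv_mul_cancel_left]) hend
    exact .head ⟨hstart, by omega⟩ (.trans (.mono (fun p q hpq => ⟨hpq.1, by omega⟩) _ _ hchain)
      htail)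

theorem IsAmalgam.reflTransGen_projSegment (h : IsAmalgam A C) (hX : ∀ i, IsSymmGen (X i))
    (hr : ∀ i, IsProjection C i (r i)) (hM : ∀ c ∈ C, wordLength (unionGen X) c ≤ M) (x y : G) :
    Relation.ReflTransGen (fun p q => q ∈ projSegment X C r x y ∧
      wordDist (unionGen X) p q ≤ 2 * M + 1) x y := by
  obtain ⟨c, hc, l, hl, hprod⟩ := h.exists_isReducedWord (x⁻¹ * y)
  have hy : (x * c)⁻¹ * y = wordProd l := by
    rw [mul_inv_rev, mul_assoc, ← hprod, inv_mul_cancel_left]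
  refine h.reflTransGen_projSegment_of_isReducedWord hX hr hM hl (fun s _ => ?_) hy ?_
  · lift c to A s.1 using h.le s.1 hc
    rw [mul_inv_rev, inv_mul_cancel_right, ← Subgroup.coe_inv, (hr s.1).map_coe]
    exact mul_mem (inv_mem hc) ((hr s.1).one_mem h)
  · rw [wordDist, inv_mul_cancel_left]
    exact hM c hc

theorem IsAmalgam.isThinFamily_projSegment (h : IsAmalgam A C) (hX : ∀ i, IsSymmGen (X i))
    (hr : ∀ i, IsProjection C i (r i)) (hD : ∀ i, IsFourPoint (wordDist (X i)) D)
    (hM : ∀ i, ∀ c : A i, (c : G) ∈ C → wordLength (X i) c ≤ M)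
    (hM' : ∀ c ∈ C, wordLength (unionGen X) c ≤ M) :
    IsThinFamily (wordDist (unionGen X)) (projSegment X C r) (4 * M + 2 * D + 1) where
  near x y hxy p hp := (h.wordDist_le_of_mem_projSegment hX hr hM hxy hp).trans (by omega)
  thin x y z p hp := by
    obtain ⟨q, hq, hpq⟩ := h.exists_near_of_mem_projSegment hX hr hD hM x y z hp
    exact ⟨q, hq, hpq.trans (by omega)⟩
  center x y z := by
    have hd := (h.isSymmGen_unionGen hX).isGeodesicDist
    let IsNear (S : Set G) (p : G) : Prop := ∃ q ∈ S, wordDist (unionGen X) p q ≤ 2 * M + 2 * D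
    obtain ⟨p, ⟨hp, q, hq, hpq⟩, hpz⟩ := exists_of_reflTransGen_of_cover
      (P := fun p => p ∈ projSegment X C r x z ∧ IsNear (projSegment X C r x y) p)
      (Q := IsNear (projSegment X C r y z)) (h.reflTransGen_projSegment hX hr hM' x z)
      ⟨left_mem_projSegment, x, left_mem_projSegment, by simp [hd.self]⟩
      ⟨z, right_mem_projSegment, by simp [hd.self]⟩ fun _ p ⟨hp, _⟩ => by
        obtain ⟨q, hq | hq, hpq⟩ := h.exists_near_of_mem_projSegment hX hr hD hM x y z hp
        · exact .inl ⟨hp, q, hq, hpq⟩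
        · exact .inr ⟨q, hq, hpq⟩
    refine ⟨p, hp, q, hq, ?_⟩
    rcases hpz with ⟨q', hq', hpq'⟩ | ⟨s, ⟨-, hps⟩, q', hq', hsq'⟩
    · exact ⟨q', hq', by omega, by omega⟩
    · have := hd.triangle p s q'
      exact ⟨q', hq', by omega, by omega⟩

theorem IsAmalgam.isWordHyperbolic (h : IsAmalgam A C) (hC : (C : Set G).Finite)
    (hA : ∀ i, IsWordHyperbolic (A i)) : IsWordHyperbolic G := by
  choose r hr using h.exists_isProjection
  choose X hX D hD using fun i => isWordHyperbolic_iff_exists_isFourPoint.1 (hA i)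
  obtain ⟨D', hD'⟩ := Finite.exists_le D
  choose K hK using fun i => exists_nat_bound_of_finite
    (hC.preimage (Subtype.val_injective (p := (· ∈ A i))).injOn) (wordLength (X i))
  obtain ⟨K', hK'⟩ := Finite.exists_le K
  obtain ⟨M, hM⟩ := exists_nat_bound_of_finite hC (wordLength (unionGen X))
  have hthin := h.isThinFamily_projSegment hX hr (D := D') (M := max K' M)
    (fun i x y z w => (hD i x y z w).trans (by gcongr; exact hD' i))
    (fun i c hc => (hK i c hc).trans ((hK' i).trans (le_max_left _ _)))
    (fun c hc => (hM c hc).trans (le_max_right _ _))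
  have hZ := h.isSymmGen_unionGen hX
  exact isWordHyperbolic_iff_exists_isFourPoint.2
    ⟨unionGen X, hZ, hthin.exists_isFourPoint hZ.isGeodesicDist⟩

end Hyperbolic

theorem amalgam_over_finite_hyperbolic_and_propertyQ_general {ι : Type*} [Finite ι] {G : Type u}
    [Group G] {A : ι → Subgroup G} {C : Subgroup G} (h : IsAmalgam A C)
    (hC : (C : Set G).Finite) (hyp : ∀ i, IsWordHyperbolic (A i))
    (hQ : ∀ i, HasPropertyQ (A i)) : IsWordHyperbolic G ∧ HasPropertyQ G :=
  ⟨h.isWordHyperbolic hC hyp, h.hasPropertyQ hC (fun i => (hyp i).fg) hQ⟩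

/-- **Corollary 2.** Amalgam of two (Q)-groups over a finite subgroup is word hyperbolic
with property (Q). -/
theorem amalgam_over_finite_hyperbolic_and_propertyQ {G : Type u} [Group G]
    (A₁ A₂ C : Subgroup G)
    (amal : IsAmalgamatedFreeProduct A₁ A₂ C)
    (hC : (C : Set G).Finite)
    (hyp₁ : IsWordHyperbolic ↥A₁) (hyp₂ : IsWordHyperbolic ↥A₂)
    (hQ₁ : HasPropertyQ ↥A₁) (hQ₂ : HasPropertyQ ↥A₂) :
    IsWordHyperbolic G ∧ HasPropertyQ G :=
  amalgam_over_finite_hyperbolic_and_propertyQ_general amal.isAmalgam hC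
    (Bool.forall_bool.2 ⟨hyp₂, hyp₁⟩) (Bool.forall_bool.2 ⟨hQ₂, hQ₁⟩)
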